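/- arXiv:1401.2823 — 3 statements merged into one kernel-verified Lean document; each statement's English description precedes it below -/
import Mathlib

section
/- Let η1 > 2, h > 0, and set Δ = √(η1² − 4), z₊ = √((η1 − Δ)/2), z₋ = √((η1 + Δ)/2). Then ∫₀^∞ u·J₀(u·h)/(1 + η1·u² + u⁴) du = (K₀(h·z₊) − K₀(h·z₋))/√(η1² − 4). Consequently the two-dimensional Spartan covariance C(h) = (η0/2π)·∫₀^∞ u·J₀(u·h)/(1 + η1·u² + u⁴) du equals η0·(K₀(h·z₊) − K₀(h·z₋))/(2π·√(η1² − 4)) for every amplitude η0 > 0. -/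
open MeasureTheory Real

/-- Bessel function of the first kind of order zero,
`J₀(x) = (1/π) ∫₀^π cos (x sin θ) dθ`. -/
noncomputable def besselJ0 (x : ℝ) : ℝ :=
  (1 / Real.pi) * ∫ θ in (0:ℝ)..Real.pi, Real.cos (x * Real.sin θ)

/-- Modified Bessel function of the second kind of order zero (for `x > 0`),
`K₀(x) = ∫₀^∞ exp (−x cosh t) dt`. -/
noncomputable def besselK0 (x : ℝ) : ℝ :=
  ∫ t in Set.Ioi (0:ℝ), Real.exp (-x * Real.cosh t)


/-!
The function `u ↦ 1 / (u² + p²) - 1 / (u² + q²)` is a superposition of Gaussians: it equals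
`∫ e^{-s u²} g(s) ds` over `s > 0`, with `g(s) = e^{-p² s} - e^{-q² s}`. Weber's integral
`∫ u J₀(u h) e^{-s u²} du = e^{-h² / (4 s)} / (2 s)`, which is the Fourier transform of a planar
Gaussian written in polar coordinates, therefore gives its Hankel transform as
`∫ g(s) e^{-h² / (4 s)} / (2 s) ds`, and the substitution `s = (h / (2 p)) eᵗ` turns
`∫ e^{-p² s - h² / (4 s)} / (2 s) ds` into `K₀(h p)`.

Since `|J₀| ≤ 1` and `∫ u e^{-s u²} du = 1 / (2 s)`, Fubini only needs `g(s) / s` to be integrable.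
This holds for the difference of the two exponentials but, near `s = 0`, for neither of them alone,
so the partial fractions of the Spartan spectral density have to be treated together.
-/

theorem besselJ0_zero : besselJ0 0 = 1 := by
  simp [besselJ0]

theorem continuous_besselJ0 : Continuous besselJ0 :=
  continuous_const.mul
    (intervalIntegral.continuous_parametric_intervalIntegral_of_continuous' (by fun_prop) _ _)

theorem abs_besselJ0_le_one (x : ℝ) : |besselJ0 x| ≤ 1 := by
  have hint : |∫ θ in (0 : ℝ)..π, cos (x * sin θ)| ≤ π := by
    simpa [abs_of_pos pi_pos] using intervalIntegral.norm_integral_le_of_norm_le_const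
      (a := 0) (b := π) (C := 1) (f := fun θ => cos (x * sin θ)) fun θ _ => abs_cos_le_one _
  rw [besselJ0, abs_mul, abs_of_pos (by positivity), one_div_mul_eq_div]
  exact div_le_one_of_le₀ hint pi_pos.le

theorem integral_cexp_mul_sin_mul_I (x : ℝ) :
    ∫ θ in Set.Ioo (-π) π, Complex.exp ((x * sin θ : ℝ) * Complex.I) = 2 * π * besselJ0 x := by
  let e : ℝ → ℂ := fun θ => Complex.exp ((x * sin θ : ℝ) * Complex.I)
  have he (a b : ℝ) : IntervalIntegrable e volume a b :=
    Continuous.intervalIntegrable (by fun_prop) a b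
  have he_add_neg (θ : ℝ) : e (-θ) + e θ = ((2 * cos (x * sin θ) : ℝ) : ℂ) := by
    simp only [e, sin_neg, mul_neg, Complex.ofReal_neg, Complex.ofReal_mul, Complex.ofReal_ofNat,
      Complex.ofReal_cos, Complex.two_cos, add_comm]
  calc ∫ θ in Set.Ioo (-π) π, e θ
      = (∫ θ in (-π)..0, e θ) + ∫ θ in (0 : ℝ)..π, e θ := by
        rw [← integral_Ioc_eq_integral_Ioo,
          ← intervalIntegral.integral_of_le (by linarith [pi_pos]),
          intervalIntegral.integral_add_adjacent_intervals (he _ _) (he _ _)]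
    _ = ∫ θ in (0 : ℝ)..π, ((2 * cos (x * sin θ) : ℝ) : ℂ) := by
        have hneg := intervalIntegral.integral_comp_neg e (a := 0) (b := π)
        rw [neg_zero] at hneg
        rw [← hneg, ← intervalIntegral.integral_add
          (Continuous.intervalIntegrable (by fun_prop) _ _) (he _ _)]
        simp_rw [he_add_neg]
    _ = 2 * π * besselJ0 x := by
        rw [intervalIntegral.integral_ofReal, intervalIntegral.integral_const_mul, besselJ0]
        push_cast
        field_simp

/-- The planar Fourier transform of a radial function is its Hankel transform of order zero. -/
theorem integral_radial_mul_cexp_im {f : ℝ → ℂ}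
    (hf : IntegrableOn (fun r : ℝ => r * f r) (Set.Ioi 0)) (h : ℝ) :
    ∫ z : ℂ, f ‖z‖ * Complex.exp ((h * z.im : ℝ) * Complex.I)
      = 2 * π * ∫ r in Set.Ioi (0 : ℝ), r * besselJ0 (r * h) * f r := by
  have hint : IntegrableOn (fun p : ℝ × ℝ =>
      p.1 * f p.1 * Complex.exp ((p.1 * h * sin p.2 : ℝ) * Complex.I))
      (Set.Ioi 0 ×ˢ Set.Ioo (-π) π) (volume.prod volume) := by
    rw [IntegrableOn, ← Measure.prod_restrict]
    exact (hf.comp_fst _).mul_bdd (c := 1) (by fun_prop)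
      (.of_forall fun p => (Complex.norm_exp_ofReal_mul_I _).le)
  calc ∫ z : ℂ, f ‖z‖ * Complex.exp ((h * z.im : ℝ) * Complex.I)
      = ∫ p in Set.Ioi (0 : ℝ) ×ˢ Set.Ioo (-π) π,
          p.1 * f p.1 * Complex.exp ((p.1 * h * sin p.2 : ℝ) * Complex.I) := by
        rw [← Complex.integral_comp_polarCoord_symm, polarCoord_target]
        refine setIntegral_congr_fun (measurableSet_Ioi.prod measurableSet_Ioo) fun p hp => ?_
        have him : (Complex.polarCoord.symm p).im = p.1 * sin p.2 := by
          simp [Complex.polarCoord_symm_apply, -Complex.ofReal_sin]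
        simp only [Complex.norm_polarCoord_symm, abs_of_pos (Set.mem_Ioi.1 hp.1), him,
          Complex.real_smul, ← mul_assoc, mul_comm h]
        ring_nf
    _ = ∫ r in Set.Ioi (0 : ℝ), 2 * π * (r * besselJ0 (r * h) * f r) := by
        rw [Measure.volume_eq_prod, setIntegral_prod _ hint]
        refine integral_congr_ae (.of_forall fun r => ?_)
        simp only [integral_const_mul, integral_cexp_mul_sin_mul_I]
        ring
    _ = 2 * π * ∫ r in Set.Ioi (0 : ℝ), r * besselJ0 (r * h) * f r := integral_const_mul _ _

theorem integral_mul_besselJ0_mul_cexp_neg_mul_sq {s : ℂ} (hs : 0 < s.re) (h : ℝ) :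
    ∫ u in Set.Ioi (0 : ℝ), u * besselJ0 (u * h) * Complex.exp (-s * u ^ 2)
      = Complex.exp (-h ^ 2 / (4 * s)) / (2 * s) := by
  have hs0 : s ≠ 0 := fun h0 => by simp [h0] at hs
  have hpi : (π : ℂ) ≠ 0 := by exact_mod_cast pi_ne_zero
  have hgauss : ∫ z : ℂ, Complex.exp (-s * ‖z‖ ^ 2) * Complex.exp ((h * z.im : ℝ) * Complex.I)
      = π / s * Complex.exp (-h ^ 2 / (4 * s)) := by
    have := GaussianFourier.integral_cexp_neg_mul_sq_norm_add hs (h * Complex.I) Complex.I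
    simpa [Complex.exp_add, mul_pow, Complex.inner, mul_right_comm] using this
  rw [integral_radial_mul_cexp_im (f := fun r => Complex.exp (-s * r ^ 2))
    (integrable_mul_cexp_neg_mul_sq hs).integrableOn] at hgauss
  refine mul_left_cancel₀ (mul_ne_zero two_ne_zero hpi) (hgauss.trans ?_)
  field_simp

theorem integral_mul_besselJ0_mul_exp_neg_mul_sq {s : ℝ} (hs : 0 < s) (h : ℝ) :
    ∫ u in Set.Ioi (0 : ℝ), u * besselJ0 (u * h) * exp (-s * u ^ 2)
      = exp (-h ^ 2 / (4 * s)) / (2 * s) := by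
  have hweber := integral_mul_besselJ0_mul_cexp_neg_mul_sq (s := s) hs h
  rw [← Complex.ofReal_inj, ← integral_complex_ofReal]
  exact_mod_cast hweber

theorem integral_mul_exp_neg_mul_sq {s : ℝ} (hs : 0 < s) :
    ∫ u in Set.Ioi (0 : ℝ), u * exp (-s * u ^ 2) = 1 / (2 * s) := by
  simpa [besselJ0_zero] using integral_mul_besselJ0_mul_exp_neg_mul_sq hs 0

theorem integrable_mul_exp_neg_mul_sq_mul {g : ℝ → ℝ}
    (hg : IntegrableOn (fun s => g s / s) (Set.Ioi 0)) :
    Integrable (fun p : ℝ × ℝ => p.1 * exp (-p.2 * p.1 ^ 2) * g p.2)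
      ((volume.restrict (Set.Ioi 0)).prod (volume.restrict (Set.Ioi 0))) := by
  have hg_meas : AEStronglyMeasurable g (volume.restrict (Set.Ioi 0)) := by
    refine (hg.aestronglyMeasurable.mul aestronglyMeasurable_id).congr ?_
    filter_upwards [ae_restrict_mem measurableSet_Ioi] with s hs
    exact div_mul_cancel₀ _ (ne_of_gt hs)
  have hmeas : AEStronglyMeasurable (fun p : ℝ × ℝ => p.1 * exp (-p.2 * p.1 ^ 2) * g p.2)
      ((volume.restrict (Set.Ioi 0)).prod (volume.restrict (Set.Ioi 0))) :=
    (Continuous.aestronglyMeasurable (by fun_prop)).mul hg_meas.comp_snd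
  refine (integrable_prod_iff' hmeas).2 ⟨?_, (hg.norm.div_const 2).congr ?_⟩
  · filter_upwards [ae_restrict_mem measurableSet_Ioi] with s hs
    exact (integrable_mul_exp_neg_mul_sq hs).integrableOn.mul_const _
  · filter_upwards [ae_restrict_mem measurableSet_Ioi] with s hs
    have hnorm : ∀ u ∈ Set.Ioi (0 : ℝ),
        ‖u * exp (-s * u ^ 2) * g s‖ = u * exp (-s * u ^ 2) * ‖g s‖ := fun u hu => by
      rw [norm_mul, norm_of_nonneg (mul_nonneg (le_of_lt hu) (exp_pos _).le)]
    rw [setIntegral_congr_fun measurableSet_Ioi hnorm, integral_mul_const,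
      integral_mul_exp_neg_mul_sq hs, norm_div, norm_of_nonneg (le_of_lt hs)]
    field_simp

theorem integral_mul_besselJ0_mul_integral_exp_neg_mul_sq {g : ℝ → ℝ}
    (hg : IntegrableOn (fun s => g s / s) (Set.Ioi 0)) (h : ℝ) :
    ∫ u in Set.Ioi (0 : ℝ), u * besselJ0 (u * h) * ∫ s in Set.Ioi (0 : ℝ), exp (-s * u ^ 2) * g s
      = ∫ s in Set.Ioi (0 : ℝ), exp (-h ^ 2 / (4 * s)) / (2 * s) * g s := by
  have hint : Integrable (fun p : ℝ × ℝ =>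
      besselJ0 (p.1 * h) * (p.1 * exp (-p.2 * p.1 ^ 2) * g p.2))
      ((volume.restrict (Set.Ioi 0)).prod (volume.restrict (Set.Ioi 0))) :=
    (integrable_mul_exp_neg_mul_sq_mul hg).bdd_mul (c := 1)
      (continuous_besselJ0.comp (by fun_prop)).aestronglyMeasurable
      (.of_forall fun p => abs_besselJ0_le_one _)
  calc ∫ u in Set.Ioi (0 : ℝ), u * besselJ0 (u * h) *
        ∫ s in Set.Ioi (0 : ℝ), exp (-s * u ^ 2) * g s
      = ∫ u in Set.Ioi (0 : ℝ), ∫ s in Set.Ioi (0 : ℝ),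
          besselJ0 (u * h) * (u * exp (-s * u ^ 2) * g s) := by
        simp_rw [← integral_const_mul]
        congr! 4
        ring
    _ = ∫ s in Set.Ioi (0 : ℝ), ∫ u in Set.Ioi (0 : ℝ),
          besselJ0 (u * h) * (u * exp (-s * u ^ 2) * g s) := integral_integral_swap hint
    _ = ∫ s in Set.Ioi (0 : ℝ), exp (-h ^ 2 / (4 * s)) / (2 * s) * g s := by
        refine setIntegral_congr_fun measurableSet_Ioi fun s hs => ?_
        simp only [← integral_mul_besselJ0_mul_exp_neg_mul_sq hs, ← integral_mul_const]
        congr! 2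
        ring

section ExpSubstitution

variable {c : ℝ} {E : Type*} [NormedAddCommGroup E] [NormedSpace ℝ E]

theorem range_const_mul_exp (hc : 0 < c) : Set.range (fun t : ℝ => c * exp t) = Set.Ioi 0 := by
  rw [← Function.comp_def (c * ·), Set.range_comp, range_exp, Set.image_mul_left_Ioi hc, mul_zero]

theorem injective_const_mul_exp (hc : c ≠ 0) : Function.Injective fun t : ℝ => c * exp t :=
  (mul_right_injective₀ hc).comp exp_injective

theorem abs_const_mul_exp_smul_inv_smul (hc : 0 < c) (f : ℝ → E) (t : ℝ) :
    |c * exp t| • (c * exp t)⁻¹ • f (c * exp t) = f (c * exp t) := by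
  have hpos : 0 < c * exp t := by positivity
  rw [abs_of_pos hpos, smul_inv_smul₀ hpos.ne']

theorem integral_inv_smul_Ioi (hc : 0 < c) (f : ℝ → E) :
    ∫ s in Set.Ioi (0 : ℝ), s⁻¹ • f s = ∫ t, f (c * exp t) := by
  rw [← range_const_mul_exp hc, ← Set.image_univ, integral_image_eq_integral_abs_deriv_smul .univ
    (fun t _ => ((hasDerivAt_exp t).const_mul c).hasDerivWithinAt)
    (injective_const_mul_exp hc.ne').injOn, setIntegral_univ]
  simp_rw [abs_const_mul_exp_smul_inv_smul hc]

theorem integrableOn_inv_smul_Ioi_iff (hc : 0 < c) (f : ℝ → E) :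
    IntegrableOn (fun s => s⁻¹ • f s) (Set.Ioi 0) ↔ Integrable fun t => f (c * exp t) := by
  rw [← range_const_mul_exp hc, ← Set.image_univ,
    integrableOn_image_iff_integrableOn_abs_deriv_smul .univ
      (fun t _ => ((hasDerivAt_exp t).const_mul c).hasDerivWithinAt)
      (injective_const_mul_exp hc.ne').injOn, integrableOn_univ]
  simp_rw [abs_const_mul_exp_smul_inv_smul hc]

end ExpSubstitution

theorem one_add_sq_div_two_le_cosh (t : ℝ) : 1 + t ^ 2 / 2 ≤ cosh t := by
  have hsinh : |t / 2| ≤ |sinh (t / 2)| := by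
    rw [abs_sinh]
    exact self_le_sinh_iff.2 (abs_nonneg _)
  have hcosh : cosh t = 1 + 2 * sinh (t / 2) ^ 2 := by
    rw [← mul_div_cancel₀ t two_ne_zero, cosh_two_mul, cosh_sq]
    ring_nf
  nlinarith [sq_le_sq.2 hsinh]

theorem integrable_exp_neg_mul_cosh {x : ℝ} (hx : 0 < x) :
    Integrable fun t : ℝ => exp (-x * cosh t) := by
  refine (integrable_exp_neg_mul_sq (half_pos hx)).mono' (by fun_prop) (.of_forall fun t => ?_)
  rw [norm_of_nonneg (exp_pos _).le, exp_le_exp]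
  nlinarith [one_add_sq_div_two_le_cosh t]

theorem integral_exp_neg_mul_cosh (x : ℝ) : ∫ t : ℝ, exp (-x * cosh t) = 2 * besselK0 x := by
  simpa only [cosh_abs, besselK0] using integral_comp_abs (f := fun t => exp (-x * cosh t))

section BesselK0

variable {a b : ℝ}

theorem neg_sq_mul_exp_add_sq_div_exp (ha : a ≠ 0) (hb : b ≠ 0) (t : ℝ) :
    -(a ^ 2 * (b / a * exp t) + b ^ 2 / (b / a * exp t)) = -(2 * a * b) * cosh t := by
  rw [cosh_eq, exp_neg]
  field_simp

theorem integrableOn_inv_mul_exp_neg_sq_mul_add_sq_div (ha : 0 < a) (hb : 0 < b) :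
    IntegrableOn (fun s => s⁻¹ * exp (-(a ^ 2 * s + b ^ 2 / s))) (Set.Ioi 0) := by
  refine (integrableOn_inv_smul_Ioi_iff (div_pos hb ha) _).2 ?_
  simp_rw [neg_sq_mul_exp_add_sq_div_exp ha.ne' hb.ne']
  exact integrable_exp_neg_mul_cosh (by positivity)

theorem integral_inv_mul_exp_neg_sq_mul_add_sq_div (ha : 0 < a) (hb : 0 < b) :
    ∫ s in Set.Ioi (0 : ℝ), s⁻¹ * exp (-(a ^ 2 * s + b ^ 2 / s)) = 2 * besselK0 (2 * a * b) := by
  refine (integral_inv_smul_Ioi (div_pos hb ha) _).trans ?_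
  simp_rw [neg_sq_mul_exp_add_sq_div_exp ha.ne' hb.ne']
  exact integral_exp_neg_mul_cosh _

end BesselK0

theorem abs_exp_sub_exp_le (x y : ℝ) : |exp x - exp y| ≤ |x - y| * exp (max x y) := by
  wlog hxy : x ≤ y generalizing x y
  · rw [abs_sub_comm, abs_sub_comm x, max_comm]
    exact this y x (le_of_not_ge hxy)
  rw [max_eq_right hxy, abs_sub_comm, abs_sub_comm x, abs_of_nonneg (sub_nonneg.2 hxy),
    abs_of_nonneg (sub_nonneg.2 (exp_le_exp.2 hxy))]
  calc exp y - exp x = (1 - exp (x - y)) * exp y := by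
        rw [sub_mul, one_mul, ← exp_add, sub_add_cancel]
    _ ≤ (y - x) * exp y := by
        refine mul_le_mul_of_nonneg_right ?_ (exp_pos y).le
        linarith [add_one_le_exp (x - y)]

section Laplace

variable {a b : ℝ}

theorem integrableOn_exp_neg_mul_sub_exp_neg_mul_div (ha : 0 < a) (hb : 0 < b) :
    IntegrableOn (fun s => (exp (-a * s) - exp (-b * s)) / s) (Set.Ioi 0) := by
  have hdom : IntegrableOn (fun s => |b - a| * exp (-min a b * s)) (Set.Ioi 0) :=
    (integrableOn_exp_mul_Ioi (neg_lt_zero.2 (lt_min ha hb)) 0).const_mul _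
  refine hdom.mono' (Measurable.aestronglyMeasurable (by fun_prop)) ?_
  filter_upwards [ae_restrict_mem measurableSet_Ioi] with s (hs : 0 < s)
  rw [norm_div, norm_of_nonneg hs.le, div_le_iff₀ hs]
  calc ‖exp (-a * s) - exp (-b * s)‖ ≤ |-a * s - -b * s| * exp (max (-a * s) (-b * s)) :=
        abs_exp_sub_exp_le _ _
    _ = |b - a| * exp (-min a b * s) * s := by
        rw [← max_mul_of_nonneg _ _ hs.le, max_neg_neg, ← sub_mul, abs_mul, abs_of_pos hs,
          neg_sub_neg]
        ring

theorem integral_exp_neg_mul_sub_exp_neg_mul (ha : 0 < a) (hb : 0 < b) :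
    ∫ s in Set.Ioi (0 : ℝ), (exp (-a * s) - exp (-b * s)) = 1 / a - 1 / b := by
  rw [integral_sub (integrableOn_exp_mul_Ioi (neg_lt_zero.2 ha) 0)
    (integrableOn_exp_mul_Ioi (neg_lt_zero.2 hb) 0), integral_exp_mul_Ioi (neg_lt_zero.2 ha),
    integral_exp_mul_Ioi (neg_lt_zero.2 hb)]
  simp

end Laplace

section Hankel

variable {h p q : ℝ}

theorem integral_mul_besselJ0_mul_inv_sub_inv (hh : 0 < h) (hp : 0 < p) (hq : 0 < q) :
    ∫ u in Set.Ioi (0 : ℝ), u * besselJ0 (u * h) * (1 / (u ^ 2 + p ^ 2) - 1 / (u ^ 2 + q ^ 2))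
      = besselK0 (h * p) - besselK0 (h * q) := by
  let kernel (r s : ℝ) : ℝ := s⁻¹ * exp (-(r ^ 2 * s + (h / 2) ^ 2 / s))
  have hlaplace (u : ℝ) : ∫ s in Set.Ioi (0 : ℝ),
      exp (-s * u ^ 2) * (exp (-p ^ 2 * s) - exp (-q ^ 2 * s))
        = 1 / (u ^ 2 + p ^ 2) - 1 / (u ^ 2 + q ^ 2) := by
    rw [← integral_exp_neg_mul_sub_exp_neg_mul (by positivity) (by positivity)]
    refine integral_congr_ae (.of_forall fun s => ?_)
    simp only [mul_sub, ← exp_add]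
    ring_nf
  have hkernel (r s : ℝ) :
      exp (-h ^ 2 / (4 * s)) / (2 * s) * exp (-r ^ 2 * s) = kernel r s / 2 := by
    rw [div_mul_eq_mul_div, ← exp_add]
    simp only [kernel]
    ring_nf
  have hint (r : ℝ) (hr : 0 < r) : IntegrableOn (fun s => kernel r s / 2) (Set.Ioi 0) :=
    (integrableOn_inv_mul_exp_neg_sq_mul_add_sq_div hr (half_pos hh)).div_const 2
  have hK0 (r : ℝ) (hr : 0 < r) :
      ∫ s in Set.Ioi (0 : ℝ), kernel r s / 2 = besselK0 (h * r) := by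
    rw [integral_div, integral_inv_mul_exp_neg_sq_mul_add_sq_div hr (half_pos hh)]
    ring_nf
  simp_rw [← hlaplace]
  rw [integral_mul_besselJ0_mul_integral_exp_neg_mul_sq
    (integrableOn_exp_neg_mul_sub_exp_neg_mul_div (pow_pos hp 2) (pow_pos hq 2))]
  simp_rw [mul_sub, hkernel]
  rw [integral_sub (hint p hp) (hint q hq), hK0 p hp, hK0 q hq]

theorem integral_mul_besselJ0_div_mul (hh : 0 < h) (hp : 0 < p) (hq : 0 < q) (hpq : p ≠ q) :
    ∫ u in Set.Ioi (0 : ℝ), u * besselJ0 (u * h) / ((u ^ 2 + p ^ 2) * (u ^ 2 + q ^ 2))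
      = (besselK0 (h * p) - besselK0 (h * q)) / (q ^ 2 - p ^ 2) := by
  have hdiff : q ^ 2 - p ^ 2 ≠ 0 :=
    sub_ne_zero.2 fun h => hpq ((pow_left_inj₀ hp.le hq.le two_ne_zero).1 h.symm)
  have hpartial (u : ℝ) : u * besselJ0 (u * h) / ((u ^ 2 + p ^ 2) * (u ^ 2 + q ^ 2))
      = u * besselJ0 (u * h) * (1 / (u ^ 2 + p ^ 2) - 1 / (u ^ 2 + q ^ 2)) / (q ^ 2 - p ^ 2) := by
    field_simp
    ring
  simp_rw [hpartial]
  rw [integral_div, integral_mul_besselJ0_mul_inv_sub_inv hh hp hq]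

end Hankel

/-- Two-dimensional Spartan covariance, case `η₁ > 2`. -/
theorem spartan_covariance_eta1_gt_two (η1 h : ℝ) (hη : 2 < η1) (hh : 0 < h)
    (Δ zp zm : ℝ) (hΔ : Δ = Real.sqrt (η1 ^ 2 - 4))
    (hzp : zp = Real.sqrt ((η1 - Δ) / 2))
    (hzm : zm = Real.sqrt ((η1 + Δ) / 2)) :
    (∫ u in Set.Ioi (0:ℝ), u * besselJ0 (u * h) / (1 + η1 * u ^ 2 + u ^ 4))
      = (besselK0 (h * zp) - besselK0 (h * zm)) / Real.sqrt (η1 ^ 2 - 4) ∧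
    ∀ η0 : ℝ, 0 < η0 →
      (η0 / (2 * Real.pi)) *
          (∫ u in Set.Ioi (0:ℝ), u * besselJ0 (u * h) / (1 + η1 * u ^ 2 + u ^ 4))
        = η0 * (besselK0 (h * zp) - besselK0 (h * zm))
            / (2 * Real.pi * Real.sqrt (η1 ^ 2 - 4)) := by
  have hD : 0 < η1 ^ 2 - 4 := by nlinarith
  have hΔ_pos : 0 < Δ := hΔ ▸ sqrt_pos.2 hD
  have hΔ_sq : Δ ^ 2 = η1 ^ 2 - 4 := hΔ ▸ sq_sqrt hD.le
  have hΔ_lt : Δ < η1 := by nlinarith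
  have hzp_pos : 0 < zp := hzp ▸ sqrt_pos.2 (by linarith)
  have hzm_pos : 0 < zm := hzm ▸ sqrt_pos.2 (by linarith)
  have hzp_sq : zp ^ 2 = (η1 - Δ) / 2 := hzp ▸ sq_sqrt (by linarith)
  have hzm_sq : zm ^ 2 = (η1 + Δ) / 2 := hzm ▸ sq_sqrt (by linarith)
  have hfactor (u : ℝ) : 1 + η1 * u ^ 2 + u ^ 4 = (u ^ 2 + zp ^ 2) * (u ^ 2 + zm ^ 2) := by
    rw [hzp_sq, hzm_sq]
    linear_combination (1 / 4) * hΔ_sq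
  have hdiff : zm ^ 2 - zp ^ 2 = Δ := by linarith
  have hne : zp ≠ zm := by
    rintro rfl
    linarith
  have hintegral : (∫ u in Set.Ioi (0:ℝ), u * besselJ0 (u * h) / (1 + η1 * u ^ 2 + u ^ 4))
      = (besselK0 (h * zp) - besselK0 (h * zm)) / Real.sqrt (η1 ^ 2 - 4) := by
    simp_rw [hfactor]
    rw [integral_mul_besselJ0_div_mul hh hzp_pos hzm_pos hne, hdiff, hΔ]
  exact ⟨hintegral, fun η0 _ => by rw [hintegral, div_mul_div_comm]⟩
end

section
/- Let −2 < η1 < 2, 0 < α < 1, and ξ > 0. Then ∫₀^∞ x^{1+2α}/(1 + η1·ξ²·x² + ξ⁴·x⁴) dx = ξ^{−2−2α}·Γ(1+α)·Γ(1−α)·sin(α·arccos(η1/2))/(α·√(4 − η1²)). (This is the real form of the value of the integral I_α(φ) in the correlation-spectrum computation of Proposition 3 for |η1| < 2, obtained from the complex-root formula by writing η1 ± i√(4−η1²) = 2 e^{±i·arccos(η1/2)}.) -/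
open MeasureTheory Real

/-!
For `z > 0` the substitution `x = t / (1 + t)` turns the Mellin transform of `(t + z)⁻¹` into a
Beta integral, with value `Γ(s) Γ(1 - s) z ^ (s - 1)`; by the identity theorem this persists for
all `z` in the slit plane. Since `1 + 2 t cos θ + t²` has the roots `-exp (± iθ)`, partial
fractions give the transform of its inverse for `0 < re s < 1`, and the symmetry `t ↦ 1 / t`,
which exchanges `s` and `2 - s`, carries it to `1 < re s < 2`. The integral in question is this
transform at `s = 1 + α` with `η₁ = 2 cos θ`, after the substitution `t = (ξ x)²`.
-/

section Mellin

open Complex Filter Set Topology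

variable {s z : ℂ}

theorem exists_pos_forall_le_norm_ofReal_add (hz : z ∈ slitPlane) :
    ∃ δ > 0, ∀ t : ℝ, 0 ≤ t → δ ≤ ‖(t : ℂ) + z‖ := by
  rcases mem_slitPlane_iff.1 hz with hre | him
  · refine ⟨z.re, hre, fun t ht ↦ ?_⟩
    calc z.re ≤ ((t : ℂ) + z).re := by simpa using ht
      _ ≤ ‖(t : ℂ) + z‖ := re_le_norm _
  · refine ⟨|z.im|, abs_pos.2 him, fun t _ ↦ ?_⟩
    simpa using abs_im_le_norm ((t : ℂ) + z)

theorem ofReal_add_mem_slitPlane (hz : z ∈ slitPlane) {t : ℝ} (ht : 0 ≤ t) :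
    (t : ℂ) + z ∈ slitPlane := by
  refine mem_slitPlane_iff.2 ((mem_slitPlane_iff.1 hz).imp (fun hre ↦ ?_) fun him ↦ ?_)
  · simpa using add_pos_of_nonneg_of_pos ht hre
  · simpa using him

theorem exists_eventually_norm_inv_ofReal_add_le (hz : z ∈ slitPlane) :
    ∃ C > 0, ∀ᶠ w in 𝓝 z, ∀ t : ℝ, 0 ≤ t → ‖((t : ℂ) + w)⁻¹‖ ≤ C * (1 + t)⁻¹ := by
  obtain ⟨δ, hδ, hδz⟩ := exists_pos_forall_le_norm_ofReal_add hz
  refine ⟨1 + (1 + ‖z‖ + δ / 2) / (δ / 2), by positivity, ?_⟩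
  filter_upwards [Metric.ball_mem_nhds z (half_pos hδ)] with w hw t ht
  have hwz : ‖w - z‖ < δ / 2 := mem_ball_iff_norm.1 hw
  have hlow : δ / 2 ≤ ‖(t : ℂ) + w‖ := by
    have := norm_le_norm_add_norm_sub' ((t : ℂ) + z) (t + w)
    rw [add_sub_add_left_eq_sub, norm_sub_rev] at this
    linarith [hδz t ht]
  have ht_le : t ≤ ‖(t : ℂ) + w‖ + ‖w‖ := by
    simpa [abs_of_nonneg ht] using norm_sub_le ((t : ℂ) + w) w
  have hw_le : ‖w‖ ≤ ‖z‖ + δ / 2 := by linarith [norm_le_norm_add_norm_sub' w z]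
  rw [norm_inv, ← div_eq_mul_inv, inv_le_comm₀ (by linarith) (by positivity), inv_div,
    div_le_iff₀ (by positivity)]
  calc 1 + t ≤ ‖(t : ℂ) + w‖ + (1 + ‖z‖ + δ / 2) / (δ / 2) * (δ / 2) := by
        rw [div_mul_cancel₀ _ (half_pos hδ).ne']
        linarith
    _ ≤ ‖(t : ℂ) + w‖ + (1 + ‖z‖ + δ / 2) / (δ / 2) * ‖(t : ℂ) + w‖ := by gcongr
    _ = ‖(t : ℂ) + w‖ * (1 + (1 + ‖z‖ + δ / 2) / (δ / 2)) := by ring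

theorem continuousOn_inv_ofReal_add (hz : z ∈ slitPlane) :
    ContinuousOn (fun t : ℝ ↦ ((t : ℂ) + z)⁻¹) (Ioi 0) :=
  ContinuousOn.inv₀ (by fun_prop) fun _ ht ↦
    slitPlane_ne_zero (ofReal_add_mem_slitPlane hz (le_of_lt ht))

theorem mellinConvergent_inv_ofReal_add (hs0 : 0 < s.re) (hs1 : s.re < 1) (hz : z ∈ slitPlane) :
    MellinConvergent (fun t : ℝ ↦ ((t : ℂ) + z)⁻¹) s := by
  obtain ⟨C, hC, hCz⟩ := exists_eventually_norm_inv_ofReal_add_le hz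
  have hbound {t : ℝ} (ht : 0 < t) := hCz.self_of_nhds t ht.le
  refine mellinConvergent_of_isBigO_rpow (a := 1) (b := 0)
    ((continuousOn_inv_ofReal_add hz).locallyIntegrableOn measurableSet_Ioi) ?_ hs1 ?_ hs0
  · refine .of_bound C ?_
    filter_upwards [eventually_gt_atTop 0] with t ht
    rw [Real.rpow_neg_one, Real.norm_of_nonneg (by positivity)]
    refine (hbound ht).trans ?_
    gcongr
    linarith
  · refine .of_bound C ?_
    filter_upwards [self_mem_nhdsWithin] with t (ht : 0 < t)
    rw [neg_zero, Real.rpow_zero, norm_one]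
    refine (hbound ht).trans ?_
    gcongr
    exact inv_le_one_of_one_le₀ (by linarith)

theorem differentiableOn_mellin_inv_ofReal_add (hs0 : 0 < s.re) (hs1 : s.re < 1) :
    DifferentiableOn ℂ (fun z ↦ mellin (fun t : ℝ ↦ ((t : ℂ) + z)⁻¹) s) slitPlane := by
  intro z hz
  obtain ⟨C, hC, hCz⟩ := exists_eventually_norm_inv_ofReal_add_le hz
  have hslit : ∀ᶠ w in 𝓝 z, w ∈ slitPlane := isOpen_slitPlane.mem_nhds hz
  have hcpow : ContinuousOn (fun t : ℝ ↦ (t : ℂ) ^ (s - 1)) (Ioi 0) := fun t ht ↦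
    (continuousAt_ofReal_cpow_const _ _ (.inr (ne_of_gt ht))).continuousWithinAt
  refine (hasDerivAt_integral_of_dominated_loc_of_deriv_le (μ := volume.restrict (Ioi (0 : ℝ)))
    (F := fun w (t : ℝ) ↦ (t : ℂ) ^ (s - 1) • ((t : ℂ) + w)⁻¹)
    (F' := fun w t ↦ (t : ℂ) ^ (s - 1) • -(((t : ℂ) + w)⁻¹ ^ 2))
    (bound := fun t ↦ C ^ 2 * ‖(t : ℂ) ^ (s - 1) • ((t : ℂ) + 1)⁻¹‖)
    (hCz.and hslit) ?_ (mellinConvergent_inv_ofReal_add hs0 hs1 hz) ?_ ?_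
    ((mellinConvergent_inv_ofReal_add hs0 hs1 one_mem_slitPlane).norm.const_mul _)
    ?_).2.differentiableAt.differentiableWithinAt
  · filter_upwards [hslit] with w hw
    exact (mellinConvergent_inv_ofReal_add hs0 hs1 hw).aestronglyMeasurable
  · exact (hcpow.smul ((continuousOn_inv_ofReal_add hz).pow 2).neg).aestronglyMeasurable
      measurableSet_Ioi
  · filter_upwards [ae_restrict_mem measurableSet_Ioi] with t (ht : 0 < t) w ⟨hCw, _⟩
    have hnorm : ‖(t : ℂ) + 1‖ = 1 + t := by
      rw [add_comm, ← ofReal_one, ← ofReal_add, norm_real, Real.norm_of_nonneg (by positivity)]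
    have hsq : ‖((t : ℂ) + w)⁻¹‖ ^ 2 ≤ C ^ 2 * (1 + t)⁻¹ := calc
      ‖((t : ℂ) + w)⁻¹‖ ^ 2 ≤ (C * (1 + t)⁻¹) ^ 2 := by gcongr; exact hCw t ht.le
      _ = C ^ 2 * ((1 + t)⁻¹ * (1 + t)⁻¹) := by ring
      _ ≤ C ^ 2 * (1 * (1 + t)⁻¹) := by gcongr; exact inv_le_one_of_one_le₀ (by linarith)
      _ = C ^ 2 * (1 + t)⁻¹ := by rw [one_mul]
    rw [norm_smul, norm_smul, mul_left_comm, norm_neg, norm_inv (_ + 1), norm_pow, hnorm]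
    gcongr
  · filter_upwards [ae_restrict_mem measurableSet_Ioi] with t (ht : 0 < t) w ⟨_, hw⟩
    have hne := slitPlane_ne_zero (ofReal_add_mem_slitPlane hw ht.le)
    simpa [div_eq_mul_inv] using (((hasDerivAt_id' w).const_add (t : ℂ)).fun_inv hne).const_mul
      ((t : ℂ) ^ (s - 1))

theorem setIntegral_Ioo_eq_setIntegral_Ioi_div_one_add {E : Type*} [NormedAddCommGroup E]
    [NormedSpace ℝ E] (g : ℝ → E) :
    ∫ x in Ioo 0 1, g x = ∫ t in Ioi 0, ((1 + t) ^ 2)⁻¹ • g (t / (1 + t)) := by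
  have hderiv : ∀ t ∈ Ioi (0 : ℝ),
      HasDerivWithinAt (fun t ↦ t / (1 + t)) ((1 + t) ^ 2)⁻¹ (Ioi 0) t := fun t (ht : 0 < t) ↦ by
    have := (hasDerivAt_id' t).fun_div ((hasDerivAt_id' t).const_add 1) (by positivity)
    simpa using this.hasDerivWithinAt
  have hinj : InjOn (fun t : ℝ ↦ t / (1 + t)) (Ioi 0) := by
    intro t (ht : 0 < t) u (hu : 0 < u) htu
    rw [div_eq_div_iff (by positivity) (by positivity)] at htu
    linarith
  have himage : (fun t : ℝ ↦ t / (1 + t)) '' Ioi 0 = Ioo 0 1 := by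
    ext x
    constructor
    · rintro ⟨t, ht : 0 < t, rfl⟩
      exact ⟨by positivity, (div_lt_one (by positivity)).2 (by linarith)⟩
    · rintro ⟨hx0, hx1⟩
      have := sub_pos.2 hx1
      refine ⟨x / (1 - x), div_pos hx0 this, ?_⟩
      field_simp
      ring
  rw [← himage, integral_image_eq_integral_abs_deriv_smul measurableSet_Ioi hderiv hinj]
  simp_rw [abs_inv, abs_sq]

theorem mellin_one_add_cpow_neg (a b : ℂ) :
    mellin (fun t : ℝ ↦ (1 + t : ℂ) ^ (-(a + b))) a = betaIntegral a b := by
  rw [betaIntegral, intervalIntegral.integral_of_le zero_le_one, integral_Ioc_eq_integral_Ioo,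
    setIntegral_Ioo_eq_setIntegral_Ioi_div_one_add]
  refine setIntegral_congr_fun measurableSet_Ioi fun t (ht : 0 < t) ↦ ?_
  have hpos : 0 < 1 + t := by positivity
  have hne : ((1 + t : ℝ) : ℂ) ≠ 0 := ofReal_ne_zero.2 hpos.ne'
  have hcompl : (1 : ℂ) - (t / (1 + t) : ℝ) = ((1 + t : ℝ) : ℂ)⁻¹ := by
    rw [← ofReal_one, ← ofReal_sub, one_sub_div hpos.ne', add_sub_cancel_right, one_div, ofReal_inv]
  have hexp : ((1 + t : ℝ) : ℂ) ^ (-(a + b)) = ((1 + t : ℝ) : ℂ)⁻¹ ^ 2 *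
      (((1 + t : ℝ) : ℂ) ^ (-(a - 1)) * ((1 + t : ℝ) : ℂ) ^ (-(b - 1))) := by
    rw [← cpow_neg_one, ← cpow_mul_nat, ← cpow_add _ _ hne, ← cpow_add _ _ hne]
    congr 1
    push_cast
    ring
  beta_reduce
  rw [hcompl, ofReal_div, div_cpow_ofReal_nonneg ht.le hpos.le, inv_cpow_ofReal_nonneg hpos.le,
    real_smul, smul_eq_mul, ofReal_inv, ofReal_pow, ← inv_pow, div_eq_mul_inv, ← cpow_neg,
    ← cpow_neg]
  rw [ofReal_add, ofReal_one] at hexp ⊢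
  rw [hexp]
  ring

theorem mellin_inv_ofReal_add_ofReal (hs0 : 0 < s.re) (hs1 : s.re < 1) {r : ℝ} (hr : 0 < r) :
    mellin (fun t : ℝ ↦ ((t : ℂ) + r)⁻¹) s = Gamma s * Gamma (1 - s) * (r : ℂ) ^ (s - 1) := by
  have hscale (t : ℝ) : ((t : ℂ) + r)⁻¹ =
      (r : ℂ)⁻¹ • (1 + ((r⁻¹ * t : ℝ) : ℂ)) ^ (-(s + (1 - s))) := by
    have : (r : ℂ) ≠ 0 := mod_cast hr.ne'
    rw [add_sub_cancel, cpow_neg_one, smul_eq_mul, ← mul_inv]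
    push_cast
    field_simp
    ring_nf
  simp_rw [hscale]
  rw [mellin_const_smul, mellin_comp_mul_left (fun u : ℝ ↦ (1 + u : ℂ) ^ (-(s + (1 - s)))) s
    (inv_pos.2 hr), mellin_one_add_cpow_neg, Gamma_mul_Gamma_eq_betaIntegral hs0 (by simpa),
    add_sub_cancel, Complex.Gamma_one, one_mul, ofReal_inv, inv_cpow_ofReal_nonneg hr.le, cpow_neg,
    inv_inv, cpow_sub _ _ (mod_cast hr.ne'), cpow_one, smul_eq_mul, smul_eq_mul]
  ring

theorem hasMellin_inv_ofReal_add (hs0 : 0 < s.re) (hs1 : s.re < 1) (hz : z ∈ slitPlane) :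
    HasMellin (fun t : ℝ ↦ ((t : ℂ) + z)⁻¹) s (Gamma s * Gamma (1 - s) * z ^ (s - 1)) := by
  refine ⟨mellinConvergent_inv_ofReal_add hs0 hs1 hz, ?_⟩
  have hf := (differentiableOn_mellin_inv_ofReal_add hs0 hs1).analyticOnNhd isOpen_slitPlane
  have hg : AnalyticOnNhd ℂ (fun z ↦ Gamma s * Gamma (1 - s) * z ^ (s - 1)) slitPlane :=
    DifferentiableOn.analyticOnNhd (fun z hz ↦ ((differentiableAt_id.cpow_const hz).const_mul
      _).differentiableWithinAt) isOpen_slitPlane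
  have hreal : ∃ᶠ w in 𝓝[≠] (1 : ℂ), mellin (fun t : ℝ ↦ ((t : ℂ) + w)⁻¹) s =
      Gamma s * Gamma (1 - s) * w ^ (s - 1) := by
    have hlim : Tendsto ((↑) : ℝ → ℂ) (𝓝[≠] 1) (𝓝[≠] 1) := by
      have := continuous_ofReal.continuousAt.continuousWithinAt.tendsto_nhdsWithin
        (x := (1 : ℝ)) (s := {1}ᶜ) (t := {1}ᶜ) (by simp +contextual [MapsTo])
      simpa using this
    refine hlim.frequently (Eventually.frequently ?_)
    filter_upwards [nhdsWithin_le_nhds (lt_mem_nhds one_pos)] with r hr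
    exact mellin_inv_ofReal_add_ofReal hs0 hs1 hr
  exact hf.eqOn_of_preconnected_of_frequently_eq hg
    (starConvex_one_slitPlane.isPathConnected one_mem_slitPlane).isConnected.isPreconnected
    one_mem_slitPlane hreal hz

theorem log_exp_mul_I {φ : ℂ} (hφ : |φ.re| < π) : log (exp (φ * I)) = φ * I :=
  log_exp (by simpa using (abs_lt.1 hφ).1) (by simpa using (abs_lt.1 hφ).2.le)

theorem exp_mul_I_mem_slitPlane {φ : ℂ} (hφ : |φ.re| < π) : exp (φ * I) ∈ slitPlane := by
  rw [mem_slitPlane_iff_arg, ← log_im, log_exp_mul_I hφ]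
  exact ⟨by simpa using (abs_lt.1 hφ).2.ne, exp_ne_zero _⟩

theorem exp_mul_I_sub_exp_neg_mul_I (φ : ℂ) : exp (φ * I) - exp (-φ * I) = 2 * I * sin φ := by
  linear_combination -I * two_sin φ + (exp (φ * I) - exp (-φ * I)) * I_mul_I

theorem hasMellin_inv_ofReal_add_exp (hs0 : 0 < s.re) (hs1 : s.re < 1) {φ : ℂ}
    (hφ : |φ.re| < π) :
    HasMellin (fun t : ℝ ↦ ((t : ℂ) + exp (φ * I))⁻¹) s
      (Gamma s * Gamma (1 - s) * exp ((s - 1) * φ * I)) := by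
  have := hasMellin_inv_ofReal_add hs0 hs1 (exp_mul_I_mem_slitPlane hφ)
  rwa [cpow_def_of_ne_zero (exp_ne_zero _), log_exp_mul_I hφ, mul_comm (φ * I), ← mul_assoc] at this

theorem inv_quadratic_eq_sub_inv {θ x : ℂ} (hsin : sin θ ≠ 0) (hpos : x + exp (θ * I) ≠ 0)
    (hneg : x + exp (-θ * I) ≠ 0) :
    (1 + 2 * cos θ * x + x ^ 2)⁻¹ =
      (2 * I * sin θ)⁻¹ • ((x + exp (-θ * I))⁻¹ - (x + exp (θ * I))⁻¹) := by
  have hprod : exp (θ * I) * exp (-θ * I) = 1 := by rw [← Complex.exp_add]; simp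
  have hfactor : (x + exp (-θ * I)) * (x + exp (θ * I)) = 1 + 2 * cos θ * x + x ^ 2 := by
    linear_combination hprod - x * two_cos θ
  have hne : 2 * I * sin θ ≠ 0 := by simp [hsin]
  rw [inv_sub_inv hneg hpos, hfactor, add_sub_add_left_eq_sub, exp_mul_I_sub_exp_neg_mul_I,
    smul_eq_mul, ← mul_div_assoc, inv_mul_cancel₀ hne, one_div]

theorem mellin_inv_quadratic {θ : ℂ} (hs0 : 0 < s.re) (hs1 : s.re < 1) (hθ : |θ.re| < π)
    (hsin : sin θ ≠ 0) :
    mellin (fun t : ℝ ↦ (1 + 2 * cos θ * t + (t : ℂ) ^ 2)⁻¹) s =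
      Gamma s * Gamma (1 - s) * sin ((1 - s) * θ) / sin θ := by
  have hθ' : |(-θ).re| < π := by simpa
  have hpos := hasMellin_inv_ofReal_add_exp hs0 hs1 hθ
  have hneg := hasMellin_inv_ofReal_add_exp hs0 hs1 hθ'
  have hne {φ : ℂ} (hφ : |φ.re| < π) {t : ℝ} (ht : 0 < t) : (t : ℂ) + exp (φ * I) ≠ 0 :=
    slitPlane_ne_zero (ofReal_add_mem_slitPlane (exp_mul_I_mem_slitPlane hφ) ht.le)
  calc mellin (fun t : ℝ ↦ (1 + 2 * cos θ * t + (t : ℂ) ^ 2)⁻¹) s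
    _ = mellin (fun t : ℝ ↦ (2 * I * sin θ)⁻¹ •
          (((t : ℂ) + exp (-θ * I))⁻¹ - ((t : ℂ) + exp (θ * I))⁻¹)) s :=
      setIntegral_congr_fun measurableSet_Ioi fun t (ht : 0 < t) ↦
        congrArg _ (inv_quadratic_eq_sub_inv hsin (hne hθ ht) (hne hθ' ht))
    _ = (2 * I * sin θ)⁻¹ • (Gamma s * Gamma (1 - s) * exp ((1 - s) * θ * I) -
          Gamma s * Gamma (1 - s) * exp (-((1 - s) * θ) * I)) := by
      rw [mellin_const_smul, (hasMellin_sub hneg.1 hpos.1).2, hneg.2, hpos.2]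
      ring_nf
    _ = Gamma s * Gamma (1 - s) * sin ((1 - s) * θ) / sin θ := by
      rw [← mul_sub, exp_mul_I_sub_exp_neg_mul_I, smul_eq_mul]
      field_simp

theorem mellin_inv_quadratic_symm (c s : ℂ) :
    mellin (fun t : ℝ ↦ (1 + c * t + (t : ℂ) ^ 2)⁻¹) (2 - s) =
      mellin (fun t : ℝ ↦ (1 + c * t + (t : ℂ) ^ 2)⁻¹) s := by
  rw [sub_eq_neg_add, ← mellin_cpow_smul, ← mellin_comp_inv]
  refine setIntegral_congr_fun measurableSet_Ioi fun t (ht : 0 < t) ↦ ?_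
  have hne : (t : ℂ) ≠ 0 := ofReal_ne_zero.2 ht.ne'
  simp only [cpow_ofNat, ofReal_inv, smul_eq_mul, inv_pow, ← mul_inv]
  congr 2
  field_simp
  ring

theorem mellin_inv_quadratic_one_add {α θ : ℂ} (hα0 : α.re ≠ 0) (hα1 : |α.re| < 1)
    (hθ : |θ.re| < π) (hsin : sin θ ≠ 0) :
    mellin (fun t : ℝ ↦ (1 + 2 * cos θ * t + (t : ℂ) ^ 2)⁻¹) (1 + α) =
      Gamma (1 + α) * Gamma (1 - α) * sin (α * θ) / (α * sin θ) := by
  obtain ⟨hlow, hhigh⟩ := abs_lt.1 hα1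
  have hne : α ≠ 0 := fun h ↦ hα0 (by simp [h])
  rcases hα0.lt_or_gt with hneg | hpos
  · have hGamma : Gamma (1 - α) = -α * Gamma (-α) := by
      rw [sub_eq_neg_add, Complex.Gamma_add_one _ (neg_ne_zero.2 hne)]
    rw [mellin_inv_quadratic (by simp; linarith) (by simpa) hθ hsin, hGamma,
      sub_add_cancel_left, neg_mul α θ, Complex.sin_neg]
    field_simp
  · have hGamma : Gamma (1 + α) = α * Gamma α := by
      rw [add_comm, Complex.Gamma_add_one _ hne]
    rw [← mellin_inv_quadratic_symm, show 2 - (1 + α) = 1 - α by ring,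
      mellin_inv_quadratic (by simp; linarith) (by simpa) hθ hsin, hGamma,
      sub_sub_cancel]
    field_simp

theorem mellin_comp_mul_sq {E : Type*} [NormedAddCommGroup E] [NormedSpace ℂ E] (f : ℝ → E) (s : ℂ)
    {ξ : ℝ} (hξ : 0 < ξ) :
    mellin (fun x ↦ f ((ξ * x) ^ 2)) s = ((ξ : ℂ) ^ (-s) / 2) • mellin f (s / 2) := by
  have hsq := mellin_comp_rpow f s 2
  simp only [rpow_two] at hsq
  rw [mellin_comp_mul_left (fun x ↦ f (x ^ 2)) s hξ, hsq, ofReal_ofNat, abs_two, ← Complex.coe_smul,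
    smul_smul, ofReal_inv, ofReal_ofNat, ← div_eq_mul_inv]

theorem ofReal_setIntegral_rpow_mul (f : ℝ → ℝ) (s : ℝ) :
    ((∫ x in Ioi 0, x ^ (s - 1) * f x : ℝ) : ℂ) = mellin (fun x ↦ (f x : ℂ)) s := by
  rw [← integral_complex_ofReal]
  refine setIntegral_congr_fun measurableSet_Ioi fun x (hx : 0 < x) ↦ ?_
  simp [ofReal_cpow hx.le]

theorem integral_rpow_mul_inv_quadratic_mul_sq {α θ ξ : ℝ} (hα0 : α ≠ 0) (hα1 : |α| < 1)
    (hθ : |θ| < π) (hsin : Real.sin θ ≠ 0) (hξ : 0 < ξ) :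
    ∫ x in Ioi 0, x ^ (1 + 2 * α) * (1 + 2 * Real.cos θ * (ξ * x) ^ 2 + ((ξ * x) ^ 2) ^ 2)⁻¹ =
      ξ ^ (-2 - 2 * α) / 2 *
        (Real.Gamma (1 + α) * Real.Gamma (1 - α) * Real.sin (α * θ) / (α * Real.sin θ)) := by
  have hsin' : sin (θ : ℂ) ≠ 0 := mod_cast hsin
  apply ofReal_injective
  rw [show 1 + 2 * α = 2 * (1 + α) - 1 by ring, ofReal_setIntegral_rpow_mul]
  push_cast [ofReal_cpow hξ.le, ← Gamma_ofReal]
  have hscale := mellin_comp_mul_sq (fun t : ℝ ↦ (1 + 2 * cos (θ : ℂ) * t + (t : ℂ) ^ 2)⁻¹)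
    (2 * (1 + α)) hξ
  push_cast at hscale
  rw [hscale, mul_div_cancel_left₀ _ two_ne_zero,
    mellin_inv_quadratic_one_add (by simpa) (by simpa) (by simpa) hsin', smul_eq_mul]
  ring_nf

end Mellin

theorem ssrf_correlation_integral_abs_eta1_lt_two_general (η1 α ξ : ℝ)
    (hη1 : -2 < η1) (hη2 : η1 < 2) (hα0 : α ≠ 0) (hα1 : |α| < 1) (hξ : 0 < ξ) :
    (∫ x in Set.Ioi (0:ℝ), x ^ (1 + 2 * α) / (1 + η1 * ξ ^ 2 * x ^ 2 + ξ ^ 4 * x ^ 4))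
      = ξ ^ (-2 - 2 * α) * Real.Gamma (1 + α) * Real.Gamma (1 - α)
          * Real.sin (α * Real.arccos (η1 / 2)) / (α * Real.sqrt (4 - η1 ^ 2)) := by
  have hcos : 2 * cos (arccos (η1 / 2)) = η1 := by
    rw [cos_arccos (by linarith) (by linarith)]
    ring
  have hsqrt : √(4 - η1 ^ 2) = 2 * sin (arccos (η1 / 2)) := by
    rw [sin_arccos, show 4 - η1 ^ 2 = 2 ^ 2 * (1 - (η1 / 2) ^ 2) by ring,
      sqrt_mul (by positivity), sqrt_sq zero_le_two]
  have hpos : 0 < arccos (η1 / 2) := arccos_pos.2 (by linarith)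
  have hlt : arccos (η1 / 2) < π := arccos_lt_pi.2 (by linarith)
  have hsin : sin (arccos (η1 / 2)) ≠ 0 := (sin_pos_of_pos_of_lt_pi hpos hlt).ne'
  have hintegrand (x : ℝ) : x ^ (1 + 2 * α) / (1 + η1 * ξ ^ 2 * x ^ 2 + ξ ^ 4 * x ^ 4) =
      x ^ (1 + 2 * α) *
        (1 + 2 * cos (arccos (η1 / 2)) * (ξ * x) ^ 2 + ((ξ * x) ^ 2) ^ 2)⁻¹ := by
    rw [hcos]
    ring
  simp_rw [hintegrand]
  rw [integral_rpow_mul_inv_quadratic_mul_sq hα0 hα1 (abs_lt.2 ⟨by linarith, hlt⟩) hsin hξ, hsqrt]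
  field_simp

/-- Value of the correlation-spectrum integral `I_α(φ)` for `|η₁| < 2` (real form):
`∫₀^∞ x^{1+2α}/(1 + η₁ξ²x² + ξ⁴x⁴) dx
  = ξ^{−2−2α} Γ(1+α) Γ(1−α) sin(α arccos(η₁/2))/(α √(4−η₁²))`. -/
theorem ssrf_correlation_integral_abs_eta1_lt_two (η1 α ξ : ℝ)
    (hη1 : -2 < η1) (hη2 : η1 < 2) (hα0 : 0 < α) (hα1 : α < 1) (hξ : 0 < ξ) :
    (∫ x in Set.Ioi (0:ℝ), x ^ (1 + 2 * α) / (1 + η1 * ξ ^ 2 * x ^ 2 + ξ ^ 4 * x ^ 4))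
      = ξ ^ (-2 - 2 * α) * Real.Gamma (1 + α) * Real.Gamma (1 - α)
          * Real.sin (α * Real.arccos (η1 / 2)) / (α * Real.sqrt (4 - η1 ^ 2)) :=
  ssrf_correlation_integral_abs_eta1_lt_two_general η1 α ξ hη1 hη2 hα0.ne'
    (abs_lt.2 ⟨by linarith, hα1⟩) hξ
end

section
/- Let 0 ≤ α < 1, h > 0, and z > 0. Then ∫₀^∞ x^{1+α}·J_α(h·x)/(x² + z²) dx = z^α·K_α(h·z), where the integral is understood as an improper (conditionally convergent) integral. (This is the Hankel–Nicholson formula with ν = α, μ = 0.) -/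
open MeasureTheory Real Filter

/-- Bessel function of the first kind of order `α > −1/2` (Poisson integral
representation): `J_α(x) = (2(x/2)^α/(√π Γ(α+1/2))) ∫₀^{π/2} sin^{2α}θ cos(x cos θ) dθ`. -/
noncomputable def besselJ (α x : ℝ) : ℝ :=
  (2 * (x / 2) ^ α / (Real.sqrt Real.pi * Real.Gamma (α + 1 / 2))) *
    ∫ θ in (0:ℝ)..(Real.pi / 2), Real.sin θ ^ (2 * α) * Real.cos (x * Real.cos θ)

/-- Modified Bessel function of the second kind of order `p` (for `x > 0`),
`K_p(x) = ∫₀^∞ exp (−x cosh t) cosh (p t) dt`. -/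
noncomputable def besselK (p x : ℝ) : ℝ :=
  ∫ t in Set.Ioi (0:ℝ), Real.exp (-x * Real.cosh t) * Real.cosh (p * t)

/-!
Write `J_ν(x) = (x / 2) ^ ν * j_ν(x)`. Since `d/dx [x ^ (2 ν + 2) j_{ν+1}(h x)] =
2 x ^ (2 ν + 1) j_ν(h x)`, one integration by parts trades the conditionally convergent integral of
`x ^ (2 ν + 1) j_ν(h x) / (x² + z²) ^ s` for the absolutely convergent one with `ν` and `s` each
raised by one; the boundary term vanishes at infinity because `j_ν(x) = O(x ^ (-ν - 1 / 2))`, which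
is the boundedness of solutions of the Liouville form `w'' = ((ν² - 1 / 4) / x² - 1) w` of Bessel's
equation.

In the absolutely convergent range, write `(x² + z²) ^ (-s)` as a Laplace transform and exchange the
integrals. The inner one is the Hankel transform of a Gaussian, which is again a Gaussian because it
satisfies `G'(y) = -(y / (2 t)) G(y)`. The outer one becomes `∫₀^∞ t ^ (-p - 1)
exp (-z² t - h² / (4 t)) dt`, and `t = (h / (2 z)) exp u` turns it into the integral defining `K_p`.
-/

section SineWeight

lemma intervalIntegrable_sin_rpow {p : ℝ} (hp : -1 < p) :
    IntervalIntegrable (fun θ => sin θ ^ p) volume 0 (π / 2) := by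
  have hpow : IntervalIntegrable (fun θ : ℝ => θ ^ p) volume 0 (π / 2) :=
    intervalIntegral.intervalIntegrable_rpow' hp
  have hsinc_pos : ∀ θ ∈ Set.uIcc 0 (π / 2), 0 < sinc θ := by
    intro θ hθ
    rw [Set.uIcc_of_le (by positivity)] at hθ
    rcases hθ.1.eq_or_lt with rfl | hθ0
    · simp
    · rw [sinc_of_ne_zero hθ0.ne']
      exact div_pos (sin_pos_of_pos_of_lt_pi hθ0 (by linarith [hθ.2, pi_pos])) hθ0
  have hsinc : ContinuousOn (fun θ => sinc θ ^ p) (Set.uIcc 0 (π / 2)) :=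
    continuous_sinc.continuousOn.rpow_const fun θ hθ => .inl (hsinc_pos θ hθ).ne'
  refine (hpow.mul_continuousOn hsinc).congr fun θ hθ => ?_
  have hθ0 : 0 < θ := by
    rw [Set.uIoc_of_le (by positivity)] at hθ
    exact hθ.1
  have hsin : sin θ = θ * sinc θ := by
    rw [sinc_of_ne_zero hθ0.ne', mul_div_cancel₀ _ hθ0.ne']
  rw [hsin, mul_rpow hθ0.le (hsinc_pos θ (Set.uIoc_subset_uIcc hθ)).le]

lemma intervalIntegrable_sin_rpow_mul {p : ℝ} (hp : -1 < p) {g : ℝ → ℝ} (hg : Continuous g) :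
    IntervalIntegrable (fun θ => sin θ ^ p * g θ) volume 0 (π / 2) :=
  (intervalIntegrable_sin_rpow hp).mul_continuousOn hg.continuousOn

lemma integral_sin_rpow_mul_cos_mul_comp_cos {p : ℝ} (hp : -1 < p) {G G' : ℝ → ℝ}
    (hG : ∀ u, HasDerivAt G (G' u) u) (hG' : Continuous G') (hG0 : G 0 = 0) :
    (p + 1) * ∫ θ in (0 : ℝ)..(π / 2), sin θ ^ p * (cos θ * G (cos θ)) =
      ∫ θ in (0 : ℝ)..(π / 2), sin θ ^ (p + 2) * G' (cos θ) := by
  have hp1 : 0 < p + 1 := by linarith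
  have hsin : Continuous fun θ => sin θ ^ (p + 1) :=
    continuous_sin.rpow_const fun θ => .inr hp1.le
  have hcomp : ∀ θ, HasDerivAt (fun θ => G (cos θ)) (G' (cos θ) * -sin θ) θ :=
    fun θ => (hG (cos θ)).comp θ (hasDerivAt_cos θ)
  have hpow : ∀ θ ∈ Set.Ioo (min 0 (π / 2)) (max 0 (π / 2)),
      HasDerivAt (fun θ => sin θ ^ (p + 1)) ((p + 1) * (sin θ ^ p * cos θ)) θ := by
    intro θ hθ
    rw [min_eq_left (by positivity), max_eq_right (by positivity)] at hθ
    convert (hasDerivAt_sin θ).rpow_const (p := p + 1)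
      (.inl (sin_pos_of_pos_of_lt_pi hθ.1 (by linarith [hθ.2, pi_pos])).ne') using 1
    rw [add_sub_cancel_right]
    ring
  have hparts := intervalIntegral.integral_mul_deriv_eq_deriv_mul_of_hasDerivAt
    hsin.continuousOn (continuous_iff_continuousAt.2 fun θ => (hcomp θ).continuousAt).continuousOn
    hpow (fun θ _ => hcomp θ)
    ((intervalIntegrable_sin_rpow_mul hp continuous_cos).const_mul _)
    (Continuous.intervalIntegrable (by fun_prop) _ _)
  have hboundary : sin (π / 2) ^ (p + 1) * G (cos (π / 2)) - sin 0 ^ (p + 1) * G (cos 0) = 0 := by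
    rw [cos_pi_div_two, hG0, sin_zero, zero_rpow hp1.ne']
    ring
  rw [hboundary, zero_sub, eq_comm, neg_eq_iff_eq_neg, ← intervalIntegral.integral_neg] at hparts
  rw [← intervalIntegral.integral_const_mul]
  convert hparts using 1
  · simp only [mul_assoc]
  · refine intervalIntegral.integral_congr fun θ hθ => ?_
    rw [Set.uIcc_of_le (by positivity)] at hθ
    have hsin_add_two : sin θ ^ (p + 2) = sin θ ^ (p + 1) * sin θ := by
      rw [← rpow_add_one' (sin_nonneg_of_nonneg_of_le_pi hθ.1 (by linarith [hθ.2, pi_pos]))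
        (by linarith), add_assoc, one_add_one_eq_two]
    rw [hsin_add_two]
    ring

lemma hasDerivAt_integral_mul_cos_mul {w g : ℝ → ℝ} {a b : ℝ}
    (hw : IntervalIntegrable w volume a b) (hg : Continuous g) (x : ℝ) :
    HasDerivAt (fun x => ∫ θ in a..b, w θ * cos (x * g θ))
      (-∫ θ in a..b, w θ * (g θ * sin (x * g θ))) x := by
  rw [← intervalIntegral.integral_neg]
  refine (intervalIntegral.hasDerivAt_integral_of_dominated_loc_of_deriv_le
    (F := fun x θ => w θ * cos (x * g θ)) (F' := fun x θ => -(w θ * (g θ * sin (x * g θ))))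
    (bound := fun θ => |w θ * g θ|)
    (Metric.ball_mem_nhds x one_pos) ?_ ?_ ?_ ?_ ?_ ?_).2
  · exact .of_forall fun y => (hw.mul_continuousOn (by fun_prop)).def'.aestronglyMeasurable
  · exact hw.mul_continuousOn (by fun_prop)
  · exact (hw.mul_continuousOn (by fun_prop)).neg.def'.aestronglyMeasurable
  · refine .of_forall fun θ _ y _ => ?_
    rw [norm_neg, ← mul_assoc, norm_mul, norm_eq_abs, norm_eq_abs]
    exact mul_le_of_le_one_right (abs_nonneg _) (abs_sin_le_one _)
  · exact (hw.mul_continuousOn hg.continuousOn).abs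
  · refine .of_forall fun θ _ y _ => ?_
    exact ((hasDerivAt_mul_const (g θ)).cos.const_mul (w θ)).congr_deriv (by ring)

lemma integral_sin_rpow_mul_cos_mul_sin {p : ℝ} (hp : -1 < p) (x : ℝ) :
    (p + 1) * ∫ θ in (0 : ℝ)..(π / 2), sin θ ^ p * (cos θ * sin (x * cos θ)) =
      x * ∫ θ in (0 : ℝ)..(π / 2), sin θ ^ (p + 2) * cos (x * cos θ) := by
  have hderiv : ∀ u, HasDerivAt (fun u => sin (x * u)) (x * cos (x * u)) u := fun u =>
    (hasDerivAt_const_mul x).sin.congr_deriv (mul_comm _ _)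
  rw [integral_sin_rpow_mul_cos_mul_comp_cos hp hderiv (by fun_prop) (by simp),
    ← intervalIntegral.integral_const_mul]
  simp only [mul_left_comm]

lemma integral_sin_rpow_mul_cos {p : ℝ} (hp : -1 < p) (x : ℝ) :
    (p + 1) * ∫ θ in (0 : ℝ)..(π / 2), sin θ ^ p * cos (x * cos θ) =
      (p + 2) * (∫ θ in (0 : ℝ)..(π / 2), sin θ ^ (p + 2) * cos (x * cos θ)) -
        x * ∫ θ in (0 : ℝ)..(π / 2), sin θ ^ (p + 2) * (cos θ * sin (x * cos θ)) := by
  have hderiv : ∀ u, HasDerivAt (fun u => u * cos (x * u))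
      (cos (x * u) - x * (u * sin (x * u))) u := fun u =>
    ((hasDerivAt_id' u).fun_mul (hasDerivAt_const_mul x).cos).congr_deriv (by ring)
  have hparts := integral_sin_rpow_mul_cos_mul_comp_cos hp hderiv (by fun_prop) (by simp)
  have hint : ∀ {q : ℝ}, -1 < q →
      IntervalIntegrable (fun θ => sin θ ^ q * cos (x * cos θ)) volume 0 (π / 2) :=
    fun hq => intervalIntegrable_sin_rpow_mul hq (by fun_prop)
  have hpyth : ∫ θ in (0 : ℝ)..(π / 2), sin θ ^ p * (cos θ * (cos θ * cos (x * cos θ))) =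
      (∫ θ in (0 : ℝ)..(π / 2), sin θ ^ p * cos (x * cos θ)) -
        ∫ θ in (0 : ℝ)..(π / 2), sin θ ^ (p + 2) * cos (x * cos θ) := by
    rw [← intervalIntegral.integral_sub (hint hp) (hint (by linarith))]
    refine intervalIntegral.integral_congr_ae (.of_forall fun θ hθ => ?_)
    rw [Set.uIoc_of_le (by positivity)] at hθ
    rw [rpow_add (sin_pos_of_pos_of_lt_pi hθ.1 (by linarith [hθ.2, pi_pos])), rpow_two, sin_sq]
    ring
  have hsplit : ∫ θ in (0 : ℝ)..(π / 2),
        sin θ ^ (p + 2) * (cos (x * cos θ) - x * (cos θ * sin (x * cos θ))) =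
      (∫ θ in (0 : ℝ)..(π / 2), sin θ ^ (p + 2) * cos (x * cos θ)) -
        x * ∫ θ in (0 : ℝ)..(π / 2), sin θ ^ (p + 2) * (cos θ * sin (x * cos θ)) := by
    rw [← intervalIntegral.integral_const_mul, ← intervalIntegral.integral_sub
      (hint (by linarith))
      ((intervalIntegrable_sin_rpow_mul (by linarith) (by fun_prop)).const_mul x)]
    simp only [mul_sub, mul_left_comm]
  rw [hpyth, hsplit] at hparts
  linear_combination hparts

end SineWeight

section BetaIntegral

lemma integral_rpow_mul_one_sub_rpow {a b : ℝ} (ha : 0 < a) (hb : 0 < b) :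
    ∫ u in (0 : ℝ)..1, u ^ (a - 1) * (1 - u) ^ (b - 1) = Gamma a * Gamma b / Gamma (a + b) := by
  have hcast : Complex.betaIntegral a b =
      ((∫ u in (0 : ℝ)..1, u ^ (a - 1) * (1 - u) ^ (b - 1) : ℝ) : ℂ) := by
    rw [Complex.betaIntegral, ← intervalIntegral.integral_ofReal]
    refine intervalIntegral.integral_congr fun u hu => ?_
    rw [Set.uIcc_of_le zero_le_one] at hu
    push_cast [Complex.ofReal_cpow hu.1, Complex.ofReal_cpow (sub_nonneg.2 hu.2)]
    rfl
  rw [← ProbabilityTheory.beta, ProbabilityTheory.beta_eq_betaIntegralReal a b ha hb, hcast,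
    Complex.ofReal_re]

lemma integral_sin_rpow_mul_cos_rpow {a b : ℝ} (ha : 0 < a) (hb : 0 < b) :
    ∫ θ in (0 : ℝ)..(π / 2), sin θ ^ (2 * a - 1) * cos θ ^ (2 * b - 1) =
      Gamma a * Gamma b / (2 * Gamma (a + b)) := by
  have hsubst := intervalIntegral.integral_deriv_smul_comp_of_deriv_nonneg
    (a := 0) (b := π / 2) (f := fun θ => sin θ ^ 2) (f' := fun θ => 2 * sin θ * cos θ)
    (g := fun u => u ^ (a - 1) * (1 - u) ^ (b - 1)) (by fun_prop)
    (fun θ _ => ((hasDerivAt_sin θ).fun_pow 2).congr_deriv (by simp))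
    (fun θ hθ => by
      rw [min_eq_left (by positivity), max_eq_right (by positivity)] at hθ
      have := sin_pos_of_pos_of_lt_pi hθ.1 (by linarith [hθ.2, pi_pos])
      have := cos_pos_of_mem_Ioo ⟨by linarith [hθ.1, pi_pos], hθ.2⟩
      positivity)
  have hintegrand : ∫ θ in (0 : ℝ)..(π / 2), (2 * sin θ * cos θ) •
        ((fun u => u ^ (a - 1) * (1 - u) ^ (b - 1)) ∘ fun θ => sin θ ^ 2) θ =
      2 * ∫ θ in (0 : ℝ)..(π / 2), sin θ ^ (2 * a - 1) * cos θ ^ (2 * b - 1) := by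
    rw [← intervalIntegral.integral_const_mul]
    refine intervalIntegral.integral_congr_Ioo_of_le (by positivity) fun θ hθ => ?_
    have hs := sin_pos_of_pos_of_lt_pi hθ.1 (by linarith [hθ.2, pi_pos])
    have hc := cos_pos_of_mem_Ioo ⟨by linarith [hθ.1, pi_pos], hθ.2⟩
    have hodd : ∀ {r : ℝ} (q : ℝ), 0 < r → r ^ (2 * q - 1) = r * (r ^ 2) ^ (q - 1) := by
      intro r q hr
      rw [← rpow_two, ← rpow_mul hr.le, show 2 * q - 1 = 1 + 2 * (q - 1) by ring, rpow_add hr,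
        rpow_one]
    simp only [smul_eq_mul, Function.comp_apply]
    rw [← cos_sq', hodd a hs, hodd b hc]
    ring
  rw [hintegrand, sin_zero, sin_pi_div_two, zero_pow two_ne_zero, one_pow,
    integral_rpow_mul_one_sub_rpow ha hb] at hsubst
  linear_combination hsubst / 2

lemma integral_sin_rpow {p : ℝ} (hp : -1 < p) :
    ∫ θ in (0 : ℝ)..(π / 2), sin θ ^ p = √π * Gamma ((p + 1) / 2) / (2 * Gamma (p / 2 + 1)) := by
  have h := integral_sin_rpow_mul_cos_rpow (a := (p + 1) / 2) (b := 1 / 2) (by linarith) (by simp)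
  rw [Gamma_one_half_eq, show 2 * ((p + 1) / 2) - 1 = p by ring,
    show (p + 1) / 2 + 1 / 2 = p / 2 + 1 by ring] at h
  simpa [mul_comm] using h

end BetaIntegral

/-- The normalization factor `2 / (√π Γ(α + 1 / 2))` of Poisson's integral for `J_α`. -/
noncomputable def poissonConst (α : ℝ) : ℝ := 2 / (√π * Gamma (α + 1 / 2))

/-- The normalized Bessel function `j_α`, i.e. `J_α(x) = (x / 2) ^ α * j_α(x)`. Dividing out the
power leaves an even function, smooth at the origin, with `j_α(0) = 1 / Γ(α + 1)`. -/
noncomputable def normBesselJ (α x : ℝ) : ℝ :=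
  poissonConst α * ∫ θ in (0 : ℝ)..(π / 2), sin θ ^ (2 * α) * cos (x * cos θ)

lemma besselJ_eq_rpow_mul_normBesselJ (α x : ℝ) :
    besselJ α x = (x / 2) ^ α * normBesselJ α x := by
  rw [besselJ, normBesselJ, poissonConst]
  ring

section NormBesselJ

variable {α : ℝ}

lemma poissonConst_pos (hα : -1 / 2 < α) : 0 < poissonConst α := by
  have := Gamma_pos_of_pos (show 0 < α + 1 / 2 by linarith)
  rw [poissonConst]
  positivity

lemma normBesselJ_zero (hα : -1 / 2 < α) : normBesselJ α 0 = (Gamma (α + 1))⁻¹ := by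
  have hΓ : Gamma (α + 1 / 2) ≠ 0 := (Gamma_pos_of_pos (by linarith)).ne'
  simp only [normBesselJ, poissonConst, zero_mul, cos_zero, mul_one]
  rw [integral_sin_rpow (by linarith), show (2 * α + 1) / 2 = α + 1 / 2 by ring,
    mul_div_cancel_left₀ α two_ne_zero]
  -- Keeps `field_simp` from rewriting the argument of `Gamma`.
  generalize Gamma (α + 1 / 2) = Γ₀ at *
  field_simp

lemma abs_normBesselJ_le (hα : -1 / 2 < α) (x : ℝ) : |normBesselJ α x| ≤ normBesselJ α 0 := by
  have hc : 0 ≤ poissonConst α := (poissonConst_pos hα).le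
  rw [normBesselJ, normBesselJ, abs_mul, abs_of_nonneg hc]
  gcongr
  rw [← norm_eq_abs]
  refine intervalIntegral.norm_integral_le_of_norm_le (by positivity) (.of_forall fun θ hθ => ?_)
    (intervalIntegrable_sin_rpow_mul (by linarith) (by fun_prop))
  have hsin : 0 ≤ sin θ ^ (2 * α) :=
    rpow_nonneg (sin_nonneg_of_nonneg_of_le_pi hθ.1.le (by linarith [hθ.2, pi_pos])) _
  rw [norm_mul, norm_of_nonneg hsin, zero_mul, cos_zero]
  exact mul_le_mul_of_nonneg_left (abs_cos_le_one _) hsin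

lemma poissonConst_eq_mul_poissonConst_add_one (hα : -1 / 2 < α) :
    poissonConst α = (α + 1 / 2) * poissonConst (α + 1) := by
  have hα' : α + 1 / 2 ≠ 0 := by linarith
  rw [poissonConst, poissonConst, show α + 1 + 1 / 2 = α + 1 / 2 + 1 by ring, Gamma_add_one hα',
    mul_left_comm, ← mul_div_assoc, mul_div_mul_left _ _ hα']

lemma poissonConst_mul_integral_cos_mul_sin (hα : -1 / 2 < α) (x : ℝ) :
    poissonConst α * ∫ θ in (0 : ℝ)..(π / 2), sin θ ^ (2 * α) * (cos θ * sin (x * cos θ)) =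
      x / 2 * normBesselJ (α + 1) x := by
  have hparts := integral_sin_rpow_mul_cos_mul_sin (p := 2 * α) (by linarith) x
  rw [normBesselJ, mul_add_one, poissonConst_eq_mul_poissonConst_add_one hα]
  linear_combination poissonConst (α + 1) / 2 * hparts

lemma hasDerivAt_normBesselJ (hα : -1 / 2 < α) (x : ℝ) :
    HasDerivAt (normBesselJ α) (-(x / 2) * normBesselJ (α + 1) x) x := by
  refine ((hasDerivAt_integral_mul_cos_mul (intervalIntegrable_sin_rpow (by linarith))
    continuous_cos x).const_mul _).congr_deriv ?_
  rw [mul_neg, poissonConst_mul_integral_cos_mul_sin hα, neg_mul]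

lemma continuous_normBesselJ (hα : -1 / 2 < α) : Continuous (normBesselJ α) :=
  continuous_iff_continuousAt.2 fun x => (hasDerivAt_normBesselJ hα x).continuousAt

lemma normBesselJ_eq_sub (hα : -1 / 2 < α) (x : ℝ) :
    normBesselJ α x = (α + 1) * normBesselJ (α + 1) x - x ^ 2 / 4 * normBesselJ (α + 2) x := by
  have hrec := integral_sin_rpow_mul_cos (p := 2 * α) (by linarith) x
  have hsin := poissonConst_mul_integral_cos_mul_sin (α := α + 1) (by linarith) x
  rw [add_assoc, one_add_one_eq_two, mul_add_one] at hsin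
  rw [normBesselJ, normBesselJ.eq_1 (α + 1), poissonConst_eq_mul_poissonConst_add_one hα,
    mul_add_one]
  linear_combination poissonConst (α + 1) / 2 * hrec - x / 2 * hsin

lemma hasDerivAt_rpow_mul_normBesselJ_mul (hα : -1 / 2 < α) (y : ℝ) {x : ℝ} (hx : 0 < x) :
    HasDerivAt (fun x => x ^ (2 * α + 2) * normBesselJ (α + 1) (y * x))
      (2 * (x ^ (2 * α + 1) * normBesselJ α (y * x))) x := by
  have hJ := (hasDerivAt_normBesselJ (α := α + 1) (by linarith) (y * x)).comp x
    (hasDerivAt_const_mul (x := x) y)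
  refine ((hasDerivAt_rpow_const (.inl hx.ne')).mul hJ).congr_deriv ?_
  rw [normBesselJ_eq_sub hα (y * x), show 2 * α + 2 - 1 = 2 * α + 1 by ring,
    show 2 * α + 2 = 2 * α + 1 + 1 by ring, rpow_add_one hx.ne' (2 * α + 1), add_assoc α,
    one_add_one_eq_two, Function.comp_apply]
  ring

end NormBesselJ

section Decay

variable {α : ℝ}

-- The energy `e = w ^ 2 + v ^ 2` satisfies `e' = 2 k w v / x ^ 2 ≤ |k| e / x ^ 2`, so
-- `e * exp (|k| / x)` decreases.
lemma isBigO_one_of_hasDerivAt_of_hasDerivAt {w v : ℝ → ℝ} {k : ℝ}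
    (hw : ∀ x, 0 < x → HasDerivAt w (v x) x)
    (hv : ∀ x, 0 < x → HasDerivAt v ((k / x ^ 2 - 1) * w x) x) :
    w =O[atTop] fun _ => (1 : ℝ) := by
  set E : ℝ → ℝ := fun x => (w x ^ 2 + v x ^ 2) * exp (|k| / x)
  have hE' : ∀ x, 0 < x → HasDerivAt E
      ((2 * k * (w x * v x) - |k| * (w x ^ 2 + v x ^ 2)) / x ^ 2 * exp (|k| / x)) x := by
    intro x hx
    have hexp : HasDerivAt (fun x => exp (|k| / x)) (exp (|k| / x) * (|k| * -(x ^ 2)⁻¹)) x := by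
      simpa only [div_eq_mul_inv] using ((hasDerivAt_inv hx.ne').const_mul |k|).exp
    refine ((((hw x hx).fun_pow 2).fun_add ((hv x hx).fun_pow 2)).fun_mul hexp).congr_deriv ?_
    field_simp
    ring
  have hE'_nonpos : ∀ x,
      (2 * k * (w x * v x) - |k| * (w x ^ 2 + v x ^ 2)) / x ^ 2 * exp (|k| / x) ≤ 0 := by
    intro x
    refine mul_nonpos_of_nonpos_of_nonneg (div_nonpos_of_nonpos_of_nonneg ?_ (sq_nonneg x))
      (exp_pos _).le
    rcases abs_cases k with ⟨hk, hk0⟩ | ⟨hk, hk0⟩ <;> rw [hk]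
    · nlinarith [mul_nonneg hk0 (sq_nonneg (w x - v x))]
    · nlinarith [mul_nonneg (neg_nonneg.2 hk0.le) (sq_nonneg (w x + v x))]
  have hanti : AntitoneOn E (Set.Ioi 0) :=
    antitoneOn_of_hasDerivWithinAt_nonpos (convex_Ioi 0)
      (fun x hx => (hE' x hx).continuousAt.continuousWithinAt)
      (fun x hx => (hE' x (by simpa using hx)).hasDerivWithinAt) (fun x _ => hE'_nonpos x)
  refine .of_bound (√(E 1)) ?_
  filter_upwards [eventually_ge_atTop 1] with x hx
  rw [norm_one, mul_one, norm_eq_abs]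
  refine abs_le_sqrt ?_
  calc w x ^ 2 ≤ w x ^ 2 + v x ^ 2 := le_add_of_nonneg_right (sq_nonneg _)
    _ ≤ E x := le_mul_of_one_le_right (by positivity) (one_le_exp (by positivity))
    _ ≤ E 1 := hanti (Set.mem_Ioi.2 one_pos) (Set.mem_Ioi.2 (one_pos.trans_le hx)) hx

lemma normBesselJ_isBigO_rpow (hα : -1 / 2 < α) :
    normBesselJ α =O[atTop] fun x => x ^ (-(α + 1 / 2)) := by
  have hpow : ∀ x : ℝ, 0 < x →
      HasDerivAt (fun x => x ^ (α + 1 / 2)) ((α + 1 / 2) * (x ^ (α + 1 / 2) / x)) x := by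
    intro x hx
    rw [← rpow_sub_one hx.ne']
    exact hasDerivAt_rpow_const (.inl hx.ne')
  have hw : ∀ x : ℝ, 0 < x → HasDerivAt (fun x => x ^ (α + 1 / 2) * normBesselJ α x)
      (x ^ (α + 1 / 2) *
        ((α + 1 / 2) / x * normBesselJ α x - x / 2 * normBesselJ (α + 1) x)) x := fun x hx =>
    ((hpow x hx).mul (hasDerivAt_normBesselJ hα x)).congr_deriv (by ring)
  have hv : ∀ x : ℝ, 0 < x → HasDerivAt (fun x => x ^ (α + 1 / 2) *
        ((α + 1 / 2) / x * normBesselJ α x - x / 2 * normBesselJ (α + 1) x))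
      (((α ^ 2 - 1 / 4) / x ^ 2 - 1) * (x ^ (α + 1 / 2) * normBesselJ α x)) x := by
    intro x hx
    have hJ := hasDerivAt_normBesselJ hα x
    have hJ' := hasDerivAt_normBesselJ (α := α + 1) (by linarith) x
    have hinv : HasDerivAt (fun x => (α + 1 / 2) / x) ((α + 1 / 2) * -(x ^ 2)⁻¹) x := by
      simpa only [div_eq_mul_inv] using (hasDerivAt_inv hx.ne').const_mul (α + 1 / 2)
    refine ((hpow x hx).fun_mul ((hinv.fun_mul hJ).fun_sub
      (((hasDerivAt_id' x).div_const 2).fun_mul hJ'))).congr_deriv ?_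
    have hrec := normBesselJ_eq_sub hα x
    rw [add_assoc, one_add_one_eq_two]
    field_simp
    linear_combination 16 * x ^ 2 * hrec
  have hbdd := isBigO_one_of_hasDerivAt_of_hasDerivAt hw hv
  refine ((Asymptotics.isBigO_refl (fun x : ℝ => x ^ (-(α + 1 / 2))) atTop).mul hbdd).congr' ?_ ?_
  · filter_upwards [eventually_gt_atTop 0] with x hx
    rw [← mul_assoc, ← rpow_add hx, neg_add_cancel, rpow_zero, one_mul]
  · exact .of_forall fun x => mul_one _

lemma rpow_mul_normBesselJ_div_isBigO {h s : ℝ} (hα : -1 / 2 < α) (hh : 0 < h) (hs : 0 ≤ s)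
    (p z : ℝ) :
    (fun x => x ^ p * normBesselJ α (h * x) / (x ^ 2 + z ^ 2) ^ s) =O[atTop]
      fun x => x ^ (p - (α + 1 / 2) - 2 * s) := by
  have hJ : (fun x => normBesselJ α (h * x)) =O[atTop] fun x => x ^ (-(α + 1 / 2)) := by
    refine ((normBesselJ_isBigO_rpow hα).comp_tendsto
      (tendsto_id.const_mul_atTop hh)).trans ?_
    refine .of_bound (h ^ (-(α + 1 / 2))) ?_
    filter_upwards [eventually_ge_atTop 0] with x hx
    simp only [Function.comp_apply, id]
    rw [mul_rpow hh.le hx, norm_mul, norm_of_nonneg (rpow_nonneg hh.le _)]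
  have hden : (fun x : ℝ => ((x ^ 2 + z ^ 2) ^ s)⁻¹) =O[atTop] fun x => x ^ (-(2 * s)) := by
    refine .of_bound 1 ?_
    filter_upwards [eventually_gt_atTop 0] with x hx
    have hpow : x ^ (2 * s) ≤ (x ^ 2 + z ^ 2) ^ s := by
      rw [rpow_mul hx.le, rpow_two]
      exact rpow_le_rpow (sq_nonneg x) (le_add_of_nonneg_right (sq_nonneg z)) hs
    rw [rpow_neg hx.le, one_mul, norm_inv, norm_inv, norm_of_nonneg (by positivity),
      norm_of_nonneg (by positivity)]
    gcongr
  refine (((Asymptotics.isBigO_refl (fun x : ℝ => x ^ p) atTop).mul hJ).mul hden).congr' ?_ ?_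
  · simp only [div_eq_mul_inv, EventuallyEq.rfl]
  · filter_upwards [eventually_gt_atTop 0] with x hx
    rw [← rpow_add hx, ← rpow_add hx, ← sub_eq_add_neg, ← sub_eq_add_neg]

lemma continuous_rpow_mul_normBesselJ_div {p z : ℝ} (hα : -1 / 2 < α) (hp : 0 ≤ p) (hz : 0 < z)
    (h s : ℝ) : Continuous fun x => x ^ p * normBesselJ α (h * x) / (x ^ 2 + z ^ 2) ^ s := by
  have hden : ∀ x : ℝ, 0 < x ^ 2 + z ^ 2 := fun x => by positivity
  refine ((continuous_id.rpow_const fun _ => .inr hp).mul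
    ((continuous_normBesselJ hα).comp (continuous_const_mul h))).div
    (Continuous.rpow_const (by fun_prop) fun x => .inl (hden x).ne')
    fun x => (rpow_pos_of_pos (hden x) s).ne'

lemma integrableOn_rpow_mul_normBesselJ_div {h z s : ℝ} (hα : -1 / 2 < α) (hαs : α < 2 * s - 3 / 2)
    (hh : 0 < h) (hz : 0 < z) :
    IntegrableOn (fun x => x ^ (2 * α + 1) * normBesselJ α (h * x) / (x ^ 2 + z ^ 2) ^ s)
      (Set.Ioi 0) :=
  have hcont := continuous_rpow_mul_normBesselJ_div hα (by linarith) hz h s (p := 2 * α + 1)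
  (hcont.locallyIntegrable.locallyIntegrableOn _).integrableOn_of_isBigO_atTop
    (rpow_mul_normBesselJ_div_isBigO hα hh (by linarith) _ z)
    ⟨Set.Ioi 1, Ioi_mem_atTop 1, integrableOn_Ioi_rpow_of_lt (by linarith) one_pos⟩
    |>.mono_set Set.Ioi_subset_Ici_self

end Decay

/-- The Gaussian Hankel transform `∫₀^∞ x ^ (2 α + 1) exp (-t x²) j_α(y x) dx`. -/
noncomputable def gaussianHankel (α t y : ℝ) : ℝ :=
  ∫ x in Set.Ioi 0, x ^ (2 * α + 1) * exp (-t * x ^ 2) * normBesselJ α (y * x)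

section GaussianHankel

variable {α t : ℝ}

lemma integrableOn_rpow_mul_exp_neg_mul_sq_mul_normBesselJ (hα : -1 / 2 < α) (ht : 0 < t)
    {p : ℝ} (hp : -1 < p) (y : ℝ) :
    IntegrableOn (fun x => x ^ p * exp (-t * x ^ 2) * normBesselJ α (y * x)) (Set.Ioi 0) :=
  Integrable.mul_bdd (c := normBesselJ α 0) (integrableOn_rpow_mul_exp_neg_mul_sq ht hp)
    ((continuous_normBesselJ hα).comp (continuous_const_mul y)).aestronglyMeasurable
    (.of_forall fun _ => abs_normBesselJ_le hα _)

lemma hasDerivAt_gaussianHankel (hα : -1 / 2 < α) (ht : 0 < t) (y : ℝ) :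
    HasDerivAt (gaussianHankel α t) (-(y / 2) * gaussianHankel (α + 1) t y) y := by
  have hα1 : -1 / 2 < α + 1 := by linarith
  have hmeas : ∀ y, AEStronglyMeasurable
      (fun x => x ^ (2 * α + 1) * exp (-t * x ^ 2) * normBesselJ α (y * x))
      (volume.restrict (Set.Ioi 0)) := fun y =>
    (integrableOn_rpow_mul_exp_neg_mul_sq_mul_normBesselJ hα ht (by linarith) y).1
  rw [gaussianHankel, ← integral_const_mul]
  refine (hasDerivAt_integral_of_dominated_loc_of_deriv_le
    (μ := volume.restrict (Set.Ioi (0 : ℝ)))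
    (F := fun y x => x ^ (2 * α + 1) * exp (-t * x ^ 2) * normBesselJ α (y * x))
    (F' := fun y x => -(y / 2) *
      (x ^ (2 * (α + 1) + 1) * exp (-t * x ^ 2) * normBesselJ (α + 1) (y * x)))
    (bound := fun x => (|y| + 1) / 2 *
      (x ^ (2 * (α + 1) + 1) * exp (-t * x ^ 2) * normBesselJ (α + 1) 0))
    (Metric.ball_mem_nhds y one_pos) (.of_forall hmeas)
    (integrableOn_rpow_mul_exp_neg_mul_sq_mul_normBesselJ hα ht (by linarith) y)
    ((integrableOn_rpow_mul_exp_neg_mul_sq_mul_normBesselJ hα1 ht (by linarith) y).1.const_mul _)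
    ?_ (((integrableOn_rpow_mul_exp_neg_mul_sq ht (by linarith)).mul_const _).const_mul _) ?_).2
  · filter_upwards [ae_restrict_mem measurableSet_Ioi] with x (hx : 0 < x) u hu
    have hu_le : |u| ≤ |y| + 1 := by
      linarith [abs_sub_abs_le_abs_sub u y, (mem_ball_iff_norm.1 hu), norm_eq_abs (u - y)]
    rw [norm_mul, norm_neg, norm_div, norm_mul, norm_of_nonneg (by positivity : 0 ≤ _ * exp _)]
    simp only [norm_eq_abs, abs_two]
    gcongr
    exact abs_normBesselJ_le hα1 _
  · filter_upwards [ae_restrict_mem measurableSet_Ioi] with x (hx : 0 < x) u _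
    refine (((hasDerivAt_normBesselJ hα (u * x)).comp u
      (hasDerivAt_mul_const x)).const_mul _).congr_deriv ?_
    rw [show 2 * (α + 1) + 1 = 2 * α + 1 + 1 + 1 by ring, rpow_add_one hx.ne' (2 * α + 1 + 1),
      rpow_add_one hx.ne' (2 * α + 1)]
    ring

lemma gaussianHankel_eq_mul (hα : -1 / 2 < α) (ht : 0 < t) (y : ℝ) :
    gaussianHankel α t y = t * gaussianHankel (α + 1) t y := by
  have hα1 : -1 / 2 < α + 1 := by linarith
  have hint := (integrableOn_rpow_mul_exp_neg_mul_sq_mul_normBesselJ hα ht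
    (p := 2 * α + 1) (by linarith) y).const_mul 2
  have hint' := (integrableOn_rpow_mul_exp_neg_mul_sq_mul_normBesselJ hα1 ht
    (p := 2 * (α + 1) + 1) (by linarith) y).const_mul (2 * t)
  have hderiv : ∀ x ∈ Set.Ioi (0 : ℝ), HasDerivAt
      (fun x => x ^ (2 * α + 2) * normBesselJ (α + 1) (y * x) * exp (-t * x ^ 2))
      (2 * (x ^ (2 * α + 1) * exp (-t * x ^ 2) * normBesselJ α (y * x)) -
        2 * t * (x ^ (2 * (α + 1) + 1) * exp (-t * x ^ 2) * normBesselJ (α + 1) (y * x))) x := by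
    intro x hx
    refine ((hasDerivAt_rpow_mul_normBesselJ_mul hα y hx).fun_mul
      ((hasDerivAt_pow 2 x).const_mul (-t)).exp).congr_deriv ?_
    rw [show 2 * (α + 1) + 1 = 2 * α + 2 + 1 by ring, rpow_add_one (ne_of_gt hx) (2 * α + 2)]
    push_cast
    ring
  have hzero : Tendsto (fun x : ℝ => x ^ (2 * α + 2) * exp (-t * x ^ 2)) atTop (nhds 0) :=
    (rpow_mul_exp_neg_mul_sq_isLittleO_exp_neg ht _).isBigO.trans_tendsto
      (tendsto_exp_atBot.comp (tendsto_id.const_mul_atTop_of_neg (by norm_num)))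
  have hlim : Tendsto (fun x => x ^ (2 * α + 2) * normBesselJ (α + 1) (y * x) * exp (-t * x ^ 2))
      atTop (nhds 0) :=
    (hzero.zero_mul_isBoundedUnder_le (g := fun x => normBesselJ (α + 1) (y * x))
      (isBoundedUnder_of ⟨_, fun x => abs_normBesselJ_le hα1 _⟩)).congr fun x => by ring
  have hcont : Continuous
      fun x => x ^ (2 * α + 2) * normBesselJ (α + 1) (y * x) * exp (-t * x ^ 2) :=
    ((continuous_id.rpow_const fun _ => .inr (by linarith)).mul
      ((continuous_normBesselJ hα1).comp (continuous_const_mul y))).mul (by fun_prop)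
  have hFTC := integral_Ioi_of_hasDerivAt_of_tendsto hcont.continuousWithinAt hderiv
    (hint.sub hint') hlim
  rw [integral_sub hint hint', integral_const_mul, integral_const_mul, ← gaussianHankel,
    ← gaussianHankel, zero_rpow (by linarith)] at hFTC
  linear_combination hFTC / 2

lemma gaussianHankel_zero (hα : -1 / 2 < α) (ht : 0 < t) :
    gaussianHankel α t 0 = t ^ (-(α + 1)) / 2 := by
  have hΓ : Gamma (α + 1) ≠ 0 := (Gamma_pos_of_pos (by linarith)).ne'
  have hmoment := integral_rpow_mul_exp_neg_mul_rpow (p := 2) (q := 2 * α + 1) two_pos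
    (by linarith) ht
  simp only [rpow_two] at hmoment
  simp only [gaussianHankel, zero_mul]
  rw [integral_mul_const, hmoment, normBesselJ_zero hα,
    show (2 * α + 1 + 1) / 2 = α + 1 by ring, show -(2 * α + 1 + 1) / 2 = -(α + 1) by ring,
    mul_inv_cancel_right₀ hΓ, mul_one_div]

lemma gaussianHankel_eq (hα : -1 / 2 < α) (ht : 0 < t) (y : ℝ) :
    gaussianHankel α t y = t ^ (-(α + 1)) / 2 * exp (-(y ^ 2 / (4 * t))) := by
  have hderiv : ∀ y, HasDerivAt (fun y => gaussianHankel α t y * exp (y ^ 2 / (4 * t))) 0 y := by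
    intro y
    refine ((hasDerivAt_gaussianHankel hα ht y).fun_mul
      ((hasDerivAt_pow 2 y).div_const (4 * t)).exp).congr_deriv ?_
    rw [gaussianHankel_eq_mul hα ht]
    push_cast
    field_simp
    ring
  have hconst := is_const_of_deriv_eq_zero (fun y => (hderiv y).differentiableAt)
    (fun y => (hderiv y).deriv) y 0
  simp only [gaussianHankel_zero hα ht, zero_pow two_ne_zero, zero_div, exp_zero, mul_one] at hconst
  rw [exp_neg, ← hconst, mul_inv_cancel_right₀ (exp_ne_zero _)]

end GaussianHankel

section BesselK

lemma integral_exp_smul_comp_exp {E : Type*} [NormedAddCommGroup E] [NormedSpace ℝ E]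
    (g : ℝ → E) : ∫ u, exp u • g (exp u) = ∫ t in Set.Ioi 0, g t := by
  have hsubst := integral_image_eq_integral_abs_deriv_smul .univ
    (fun u _ => (hasDerivAt_exp u).hasDerivWithinAt) exp_injective.injOn g
  rw [Set.image_univ, range_exp, setIntegral_univ] at hsubst
  simp only [hsubst, abs_exp]

lemma one_add_sq_div_four_le_cosh (u : ℝ) : 1 + u ^ 2 / 4 ≤ cosh u := by
  have hexp := quadratic_le_exp_of_nonneg (abs_nonneg u)
  have hexp_neg := add_one_le_exp (-|u|)
  rw [sq_abs] at hexp
  rw [← cosh_abs, cosh_eq]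
  linarith

lemma integrable_exp_mul_sub_mul_cosh {c : ℝ} (hc : 0 < c) (p : ℝ) :
    Integrable fun u => exp (p * u - c * cosh u) := by
  have hgauss : Integrable fun u : ℝ => exp (-(c / 4) * u ^ 2 + p * u) := by
    have hcexp := (integrable_cexp_quadratic' (b := ((-(c / 4) : ℝ) : ℂ))
      (by rw [Complex.ofReal_re]; linarith) (p : ℂ) 0).norm
    refine hcexp.congr (.of_forall fun u => ?_)
    simp only [Complex.norm_exp, add_zero]
    norm_cast
  refine hgauss.mono' (by fun_prop) (.of_forall fun u => ?_)
  rw [norm_of_nonneg (exp_pos _).le, exp_le_exp]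
  nlinarith [one_add_sq_div_four_le_cosh u]

lemma integral_exp_mul_sub_mul_cosh {c : ℝ} (hc : 0 < c) (p : ℝ) :
    ∫ u, exp (p * u - c * cosh u) = 2 * besselK p c := by
  have hint := integrable_exp_mul_sub_mul_cosh hc p
  have hsymm : ∀ u, exp (-c * cosh |u|) * cosh (p * |u|) =
      (exp (p * u - c * cosh u) + exp (p * -u - c * cosh (-u))) / 2 := by
    intro u
    have hcosh : cosh (p * |u|) = cosh (p * u) := by
      rw [← cosh_abs, abs_mul, abs_abs, ← abs_mul, cosh_abs]
    rw [hcosh, cosh_abs, cosh_neg, sub_eq_add_neg, sub_eq_add_neg, exp_add, exp_add,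
      cosh_eq (p * u), mul_neg, neg_mul]
    ring
  rw [besselK, ← integral_comp_abs (f := fun u => exp (-c * cosh u) * cosh (p * u))]
  simp only [hsymm]
  rw [integral_div, integral_add hint hint.comp_neg,
    integral_neg_eq_self (fun u => exp (p * u - c * cosh u)), add_self_div_two]

lemma besselK_neg (p x : ℝ) : besselK (-p) x = besselK p x := by
  simp only [besselK, neg_mul, cosh_neg]

lemma integral_rpow_mul_exp_neg_add_eq_besselK {h z : ℝ} (hh : 0 < h) (hz : 0 < z) (p : ℝ) :
    ∫ t in Set.Ioi 0, t ^ (-(p + 1)) * exp (-(z ^ 2 * t + h ^ 2 / (4 * t))) =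
      2 * (2 * z / h) ^ p * besselK p (h * z) := by
  set b := h / (2 * z) with hb_def
  have hb : 0 < b := by positivity
  have hexponent : ∀ u, z ^ 2 * (b * exp u) + h ^ 2 / (4 * (b * exp u)) = h * z * cosh u := by
    intro u
    rw [hb_def, cosh_eq, exp_neg]
    field_simp
    ring
  have hintegrand : ∀ u, exp u • ((b * exp u) ^ (-(p + 1)) *
      exp (-(z ^ 2 * (b * exp u) + h ^ 2 / (4 * (b * exp u))))) =
      b ^ (-(p + 1)) * exp (-p * u - h * z * cosh u) := by
    intro u
    rw [hexponent, mul_rpow hb.le (exp_pos u).le, ← exp_mul, smul_eq_mul, mul_assoc, mul_left_comm,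
      ← exp_add, ← exp_add]
    ring_nf
  have hscale := integral_comp_mul_left_Ioi'
    (fun t => t ^ (-(p + 1)) * exp (-(z ^ 2 * t + h ^ 2 / (4 * t)))) 0 hb
  rw [mul_zero, ← integral_exp_smul_comp_exp] at hscale
  simp only [hintegrand] at hscale
  rw [integral_const_mul, integral_exp_mul_sub_mul_cosh (by positivity), besselK_neg] at hscale
  have hconst : b * b ^ (-(p + 1)) = (2 * z / h) ^ p := by
    rw [neg_add', rpow_sub_one hb.ne', mul_div_cancel₀ _ hb.ne', ← inv_div h, ← hb_def,
      inv_rpow hb.le, rpow_neg hb.le]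
  rw [← hscale, ← hconst, smul_eq_mul]
  ring

end BesselK

section HankelNicholson

lemma Gamma_mul_integral_div_rpow {X : Type*} [MeasurableSpace X] {μ : Measure X} [SFinite μ]
    {f φ : X → ℝ} {s : ℝ} (hs : 0 < s) (hφ : Measurable φ) (hφ_pos : ∀ x, 0 < φ x)
    (hf : Integrable (fun x => f x / φ x ^ s) μ) :
    Gamma s * ∫ x, f x / φ x ^ s ∂μ =
      ∫ t in Set.Ioi 0, t ^ (s - 1) * ∫ x, f x * exp (-(φ x * t)) ∂μ := by
  have hlaplace : ∀ x, ∫ t in Set.Ioi 0, t ^ (s - 1) * exp (-(φ x * t)) =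
      Gamma s / φ x ^ s := by
    intro x
    rw [integral_rpow_mul_exp_neg_mul_Ioi hs (hφ_pos x), one_div, inv_rpow (hφ_pos x).le,
      inv_mul_eq_div]
  have hlaplace_int : ∀ x, IntegrableOn (fun t => t ^ (s - 1) * exp (-(φ x * t))) (Set.Ioi 0) :=
    fun x => .of_integral_ne_zero (by
      rw [hlaplace]
      exact (div_pos (Gamma_pos_of_pos hs) (rpow_pos_of_pos (hφ_pos x) s)).ne')
  have hf_meas : AEStronglyMeasurable f μ :=
    (hf.1.mul (hφ.pow_const s).aestronglyMeasurable).congr (.of_forall fun x =>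
      div_mul_cancel₀ _ (rpow_pos_of_pos (hφ_pos x) s).ne')
  have hnorm : ∀ x, ∫ t in Set.Ioi 0, ‖f x * (t ^ (s - 1) * exp (-(φ x * t)))‖ =
      Gamma s * ‖f x / φ x ^ s‖ := by
    intro x
    have hinner : ∫ t in Set.Ioi 0, ‖t ^ (s - 1) * exp (-(φ x * t))‖ = Gamma s / φ x ^ s := by
      rw [← hlaplace]
      refine setIntegral_congr_fun measurableSet_Ioi fun t (ht : 0 < t) => ?_
      exact norm_of_nonneg (by positivity)
    simp only [norm_mul (f x), integral_const_mul, hinner, norm_div,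
      norm_of_nonneg (rpow_nonneg (hφ_pos x).le s)]
    ring
  have hprod : Integrable (Function.uncurry fun x t => f x * (t ^ (s - 1) * exp (-(φ x * t))))
      (μ.prod (volume.restrict (Set.Ioi 0))) := by
    refine (integrable_prod_iff ?_).2 ⟨.of_forall fun x => ?_, ?_⟩
    · exact hf_meas.comp_fst.mul (Measurable.aestronglyMeasurable (by fun_prop))
    · exact (hlaplace_int x).const_mul (f x)
    · simpa only [Function.uncurry_apply_pair, hnorm] using hf.norm.const_mul (Gamma s)
  calc Gamma s * ∫ x, f x / φ x ^ s ∂μ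
      = ∫ x, (∫ t in Set.Ioi 0, f x * (t ^ (s - 1) * exp (-(φ x * t)))) ∂μ := by
        rw [← integral_const_mul]
        simp only [integral_const_mul (f _), hlaplace, mul_div_left_comm (f _)]
    _ = ∫ t in Set.Ioi 0, ∫ x, f x * (t ^ (s - 1) * exp (-(φ x * t))) ∂μ :=
        integral_integral_swap hprod
    _ = _ := by simp only [mul_left_comm (f _), integral_const_mul]

lemma integral_rpow_mul_normBesselJ_div {α h z s : ℝ} (hα : -1 / 2 < α) (hαs : α < 2 * s - 3 / 2)
    (hh : 0 < h) (hz : 0 < z) :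
    ∫ x in Set.Ioi 0, x ^ (2 * α + 1) * normBesselJ α (h * x) / (x ^ 2 + z ^ 2) ^ s =
      (2 * z / h) ^ (α + 1 - s) / Gamma s * besselK (α + 1 - s) (h * z) := by
  have hs : 0 < s := by linarith
  have hsubord := Gamma_mul_integral_div_rpow hs (φ := fun x => x ^ 2 + z ^ 2) (by fun_prop)
    (fun x => by positivity) (integrableOn_rpow_mul_normBesselJ_div hα hαs hh hz)
  have hinner : ∀ t ∈ Set.Ioi (0 : ℝ), t ^ (s - 1) * ∫ x in Set.Ioi 0,
        x ^ (2 * α + 1) * normBesselJ α (h * x) * exp (-((x ^ 2 + z ^ 2) * t)) =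
      t ^ (-(α + 1 - s + 1)) * exp (-(z ^ 2 * t + h ^ 2 / (4 * t))) / 2 := by
    intro t ht
    have hsplit : ∀ x, x ^ (2 * α + 1) * normBesselJ α (h * x) * exp (-((x ^ 2 + z ^ 2) * t)) =
        exp (-(z ^ 2 * t)) * (x ^ (2 * α + 1) * exp (-t * x ^ 2) * normBesselJ α (h * x)) := by
      intro x
      rw [add_mul, neg_add, exp_add, neg_mul, mul_comm t]
      ring
    simp only [hsplit]
    rw [integral_const_mul, ← gaussianHankel, gaussianHankel_eq hα ht, neg_add (z ^ 2 * t), exp_add,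
      show -(α + 1 - s + 1) = s - 1 + -(α + 1) by ring, rpow_add ht]
    ring
  rw [setIntegral_congr_fun measurableSet_Ioi hinner, integral_div,
    integral_rpow_mul_exp_neg_add_eq_besselK hh hz] at hsubord
  field_simp [(Gamma_pos_of_pos hs).ne']
  linear_combination hsubord

lemma integral_rpow_mul_normBesselJ_div_eq_add {α z s R : ℝ} (hα : -1 / 2 < α) (hz : 0 < z)
    (hR : 0 ≤ R) (h : ℝ) :
    ∫ x in (0 : ℝ)..R, x ^ (2 * α + 1) * normBesselJ α (h * x) / (x ^ 2 + z ^ 2) ^ s =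
      R ^ (2 * α + 2) * normBesselJ (α + 1) (h * R) / (R ^ 2 + z ^ 2) ^ s / 2 +
        s * ∫ x in (0 : ℝ)..R,
          x ^ (2 * (α + 1) + 1) * normBesselJ (α + 1) (h * x) / (x ^ 2 + z ^ 2) ^ (s + 1) := by
  have hα1 : -1 / 2 < α + 1 := by linarith
  have hcont := continuous_rpow_mul_normBesselJ_div hα1 (p := 2 * α + 2) (by linarith) hz h s
  have hint := (continuous_rpow_mul_normBesselJ_div hα (p := 2 * α + 1) (by linarith)
    hz h s).intervalIntegrable (μ := volume) 0 R
  have hint' := (continuous_rpow_mul_normBesselJ_div hα1 (p := 2 * (α + 1) + 1) (by linarith)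
    hz h (s + 1)).intervalIntegrable (μ := volume) 0 R
  have hderiv : ∀ x ∈ Set.Ioo 0 R, HasDerivAt
      (fun x => x ^ (2 * α + 2) * normBesselJ (α + 1) (h * x) / (x ^ 2 + z ^ 2) ^ s)
      (2 * (x ^ (2 * α + 1) * normBesselJ α (h * x) / (x ^ 2 + z ^ 2) ^ s) -
        2 * s * (x ^ (2 * (α + 1) + 1) * normBesselJ (α + 1) (h * x) /
          (x ^ 2 + z ^ 2) ^ (s + 1))) x := by
    intro x hx
    have hden : 0 < x ^ 2 + z ^ 2 := by positivity
    have hpow := ((hasDerivAt_pow 2 x).add_const (z ^ 2)).rpow_const (p := s) (.inl hden.ne')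
    refine ((hasDerivAt_rpow_mul_normBesselJ_mul hα h hx.1).fun_div hpow
      (rpow_pos_of_pos hden s).ne').congr_deriv ?_
    rw [rpow_add_one hden.ne', rpow_sub_one hden.ne',
      show 2 * (α + 1) + 1 = 2 * α + 2 + 1 by ring, rpow_add_one hx.1.ne' (2 * α + 2)]
    push_cast
    field_simp
  have hFTC := intervalIntegral.integral_eq_sub_of_hasDerivAt_of_le hR hcont.continuousOn hderiv
    ((hint.const_mul 2).sub (hint'.const_mul (2 * s)))
  rw [intervalIntegral.integral_sub (hint.const_mul 2) (hint'.const_mul (2 * s)),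
    intervalIntegral.integral_const_mul, intervalIntegral.integral_const_mul,
    zero_rpow (by linarith), zero_mul, zero_div, sub_zero] at hFTC
  linear_combination hFTC / 2

lemma tendsto_integral_rpow_mul_normBesselJ_div {α h z s : ℝ} (hα : -1 / 2 < α)
    (hαs : α < 2 * s - 1 / 2) (hh : 0 < h) (hz : 0 < z) :
    Tendsto (fun R => ∫ x in (0 : ℝ)..R,
        x ^ (2 * α + 1) * normBesselJ α (h * x) / (x ^ 2 + z ^ 2) ^ s) atTop
      (nhds ((2 * z / h) ^ (α + 1 - s) / Gamma s * besselK (α + 1 - s) (h * z))) := by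
  have hα1 : -1 / 2 < α + 1 := by linarith
  have hs : 0 < s := by linarith
  have hboundary : Tendsto
      (fun R => R ^ (2 * α + 2) * normBesselJ (α + 1) (h * R) / (R ^ 2 + z ^ 2) ^ s)
      atTop (nhds 0) := by
    refine (rpow_mul_normBesselJ_div_isBigO hα1 hh hs.le _ z).trans_tendsto ?_
    convert tendsto_rpow_neg_atTop (show 0 < 2 * s - 1 / 2 - α by linarith) using 2
    ring_nf
  have hintegral := intervalIntegral_tendsto_integral_Ioi 0
    (integrableOn_rpow_mul_normBesselJ_div (s := s + 1) hα1 (by linarith) hh hz) tendsto_id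
  rw [integral_rpow_mul_normBesselJ_div hα1 (by linarith) hh hz, Gamma_add_one hs.ne',
    add_sub_add_right_eq_sub] at hintegral
  have hlim := (hboundary.div_const 2).add (hintegral.const_mul s)
  have hvalue : 0 / 2 + s * ((2 * z / h) ^ (α + 1 - s) / (s * Gamma s) *
      besselK (α + 1 - s) (h * z)) =
      (2 * z / h) ^ (α + 1 - s) / Gamma s * besselK (α + 1 - s) (h * z) := by
    field_simp
    ring
  rw [hvalue] at hlim
  refine hlim.congr' ?_
  filter_upwards [eventually_ge_atTop 0] with R hR
  rw [integral_rpow_mul_normBesselJ_div_eq_add hα hz hR, id]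

end HankelNicholson

lemma rpow_mul_besselJ_mul {ν h x : ℝ} (hh : 0 < h) (hx : 0 < x) :
    x ^ (1 + ν) * besselJ ν (h * x) =
      (h / 2) ^ ν * (x ^ (2 * ν + 1) * normBesselJ ν (h * x)) := by
  rw [besselJ_eq_rpow_mul_normBesselJ, mul_div_right_comm, mul_rpow (by positivity) hx.le,
    show 2 * ν + 1 = 1 + ν + ν by ring, rpow_add hx (1 + ν)]
  ring

theorem hankel_nicholson_nu_alpha_mu_zero_general {ν μ h z : ℝ} (hν : -1 / 2 < ν)
    (hνμ : ν < 2 * μ + 3 / 2) (hh : 0 < h) (hz : 0 < z) :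
    Tendsto (fun R : ℝ =>
        ∫ x in (0 : ℝ)..R, x ^ (1 + ν) * besselJ ν (h * x) / (x ^ 2 + z ^ 2) ^ (μ + 1)) atTop
      (nhds ((h / 2) ^ μ * z ^ (ν - μ) / Gamma (μ + 1) * besselK (ν - μ) (h * z))) := by
  have hlim := (tendsto_integral_rpow_mul_normBesselJ_div (s := μ + 1) hν (by linarith)
    hh hz).const_mul ((h / 2) ^ ν)
  have hpow : (h / 2) ^ ν * (2 * z / h) ^ (ν - μ) = (h / 2) ^ μ * z ^ (ν - μ) := by
    rw [show 2 * z / h = z / (h / 2) by field_simp, div_rpow hz.le (by positivity),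
      rpow_sub (by positivity : 0 < h / 2)]
    field_simp
  rw [add_sub_add_right_eq_sub, ← mul_assoc, ← mul_div_assoc, hpow] at hlim
  refine hlim.congr' ?_
  filter_upwards [eventually_ge_atTop 0] with R hR
  rw [← intervalIntegral.integral_const_mul]
  refine intervalIntegral.integral_congr_Ioo_of_le hR fun x hx => ?_
  simp only [rpow_mul_besselJ_mul hh hx.1, mul_div_assoc]

/-- Hankel–Nicholson formula with `ν = α`, `μ = 0`: for `0 ≤ α < 1`, `h > 0`, `z > 0`,
`∫₀^∞ x^{1+α} J_α(hx)/(x² + z²) dx = z^α K_α(hz)` as an improper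
(conditionally convergent) integral. -/
theorem hankel_nicholson_nu_alpha_mu_zero (α h z : ℝ)
    (hα0 : 0 ≤ α) (hα1 : α < 1) (hh : 0 < h) (hz : 0 < z) :
    Tendsto (fun R : ℝ =>
        ∫ x in (0:ℝ)..R, x ^ (1 + α) * besselJ α (h * x) / (x ^ 2 + z ^ 2))
      atTop (nhds (z ^ α * besselK α (h * z))) := by
  simpa using hankel_nicholson_nu_alpha_mu_zero_general (μ := 0) (by linarith : -1 / 2 < α)
    (by linarith) hh hz
end
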